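/- arXiv:1309.7833 — 4 statements merged into one kernel-verified Lean document; each statement's English description precedes it below -/
import Mathlib

section
/- Fix σ > 0 and T > 0, and for t ∈ [0,T) and s > 0 define C(t,s) := ∫_ℝ f(s·e^{−½σ²(T−t)+x}) dγ_{σ²(T−t)}(x), where γ_v is the Gaussian measure on ℝ with mean 0 and variance v. Then C(t,s) = ∫_ℝ s^{z_y} e^{½σ²z_y(z_y−1)(T−t)} p(z_y) dy; moreover, for each t ∈ [0,T) the map s ↦ C(t,s) is infinitely differentiable on (0,∞), and for every n ≥ 1 one has sⁿ·(∂ⁿ/∂sⁿ)C(t,s) = ∫_ℝ (∏_{k=0}^{n−1}(z_y−k))·s^{z_y}·e^{½σ²z_y(z_y−1)(T−t)}·p(z_y) dy. -/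
open MeasureTheory ProbabilityTheory Complex Set

noncomputable def cpowR (s : ℝ) (z : ℂ) : ℂ := Complex.exp (z * Real.log s)

noncomputable def zLine (R y : ℝ) : ℂ := (R : ℂ) + (y : ℂ) * Complex.I

/-- Fourier transform `l̂(y) = ∫ l(x) e^{-ixy} dx`. -/
noncomputable def lhat (l : ℝ → ℝ) (y : ℝ) : ℂ :=
  ∫ x : ℝ, (l x : ℂ) * Complex.exp (-(Complex.I * (x : ℂ) * (y : ℂ)))

noncomputable def pCoef (l : ℝ → ℝ) (y : ℝ) : ℂ := lhat l y / (2 * (Real.pi : ℂ))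

/-- Black-Scholes cash greek `D_n(t,s)` in integral form (with `C = D_0`). -/
noncomputable def cashGreek (σ2 T R : ℝ) (l : ℝ → ℝ) (n : ℕ) (t s : ℝ) : ℂ :=
  ∫ y : ℝ, (∏ k ∈ Finset.range n, (zLine R y - (k : ℂ))) * cpowR s (zLine R y) *
    Complex.exp (((σ2 : ℂ) / 2) * zLine R y * (zLine R y - 1) * ((T : ℂ) - (t : ℂ))) * pCoef l y

/-- Black-Scholes price `C(t,s)` as a Gaussian expectation. -/
noncomputable def BSprice (σ T : ℝ) (f : ℝ → ℝ) (t s : ℝ) : ℝ :=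
  ∫ x : ℝ, f (s * Real.exp (-(σ ^ 2 / 2) * (T - t) + x))
    ∂(gaussianReal 0 (Real.toNNReal (σ ^ 2 * (T - t))))


lemma aux_lhat_bound (l : ℝ → ℝ) (y : ℝ) :
    ‖lhat l y‖ ≤ ∫ x, ‖l x‖ := by
  unfold lhat
  refine (norm_integral_le_integral_norm _).trans (le_of_eq ?_)
  congr 1
  ext x
  rw [norm_mul, Complex.norm_exp]
  simp

lemma aux_lhat_cont (l : ℝ → ℝ) (hl : Integrable l) : Continuous (lhat l) := by
  unfold lhat
  refine continuous_of_dominated (bound := fun x => ‖l x‖) ?_ ?_ hl.norm ?_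
  · intro y
    refine AEStronglyMeasurable.mul hl.ofReal.aestronglyMeasurable ?_
    exact Continuous.aestronglyMeasurable (by fun_prop)
  · intro y
    refine Filter.Eventually.of_forall fun x => ?_
    rw [norm_mul, Complex.norm_exp]
    simp
  · refine Filter.Eventually.of_forall fun x => ?_
    fun_prop

lemma aux_poly_gauss (b : ℝ) (hb : 0 < b) (q : Polynomial ℂ) :
    Integrable (fun y : ℝ => q.eval (y : ℂ) * ((Real.exp (-b * y ^ 2) : ℝ) : ℂ)) := by
  induction q using Polynomial.induction_on' with
  | add p q hp hq =>
    simp only [Polynomial.eval_add, add_mul]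
    exact hp.add hq
  | monomial n a =>
    have h := integrable_rpow_mul_exp_neg_mul_sq hb (s := n) (by
      have : (0 : ℝ) ≤ n := Nat.cast_nonneg n
      linarith)
    have h2 := (h.ofReal (𝕜 := ℂ)).const_mul a
    refine h2.congr (Filter.Eventually.of_forall fun y => ?_)
    simp [mul_assoc]

/-- Gaussian kernel times Fourier coefficient. -/
noncomputable def auxK (v R : ℝ) (l : ℝ → ℝ) (y : ℝ) : ℂ :=
  Complex.exp (((v : ℂ) / 2) * zLine R y * (zLine R y - 1)) * pCoef l y

lemma aux_norm_exp (v R y : ℝ) :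
    ((v : ℂ) / 2) * zLine R y * (zLine R y - 1) =
      ((-(v/2) * y ^ 2 : ℝ) : ℂ) + ((v / 2 * (R ^ 2 - R) : ℝ) + (v / 2 * (2 * R - 1) * y : ℝ) * I) := by
  unfold zLine
  push_cast
  ring_nf
  simp only [I_sq]
  ring

lemma aux_int (v R : ℝ) (hv : 0 < v) (l : ℝ → ℝ) (hl : Integrable l) (q : Polynomial ℂ) :
    Integrable (fun y : ℝ => q.eval (y : ℂ) * auxK v R l y) := by
  have h := aux_poly_gauss (v/2) (by positivity) q
  have h2 := h.mul_bdd (c := Real.exp (v / 2 * (R ^ 2 - R)) * ((∫ x, ‖l x‖) / (2 * Real.pi)))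
    (g := fun y : ℝ => Complex.exp ((v / 2 * (R ^ 2 - R) : ℝ) + (v / 2 * (2 * R - 1) * y : ℝ) * I)
      * pCoef l y) ?_ ?_
  · refine h2.congr (Filter.Eventually.of_forall fun y => ?_)
    simp only [auxK]
    rw [aux_norm_exp, Complex.exp_add ((-(v/2) * y ^ 2 : ℝ) : ℂ), Complex.ofReal_exp]
    ring
  · have := aux_lhat_cont l hl
    unfold pCoef
    exact Continuous.aestronglyMeasurable (by fun_prop)
  · refine Filter.Eventually.of_forall fun y => ?_
    rw [norm_mul, Complex.norm_exp]
    have e1 : (((v / 2 * (R ^ 2 - R) : ℝ) : ℂ) + (v / 2 * (2 * R - 1) * y : ℝ) * I).re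
      = v / 2 * (R ^ 2 - R) := by
      rw [Complex.add_re, Complex.re_ofReal_mul, Complex.ofReal_re]; simp
    rw [e1]
    refine mul_le_mul_of_nonneg_left ?_ (Real.exp_nonneg _)
    unfold pCoef
    rw [norm_div]
    have e2 : ‖(2 * (Real.pi : ℂ))‖ = 2 * Real.pi := by
      simp [abs_of_pos Real.pi_pos]
    rw [e2]
    exact div_le_div_of_nonneg_right (aux_lhat_bound l y) (by positivity)

lemma aux_prod (R : ℝ) (n : ℕ) : ∃ q : Polynomial ℂ, ∀ y : ℝ,
    (∏ k ∈ Finset.range n, (zLine R y - (k : ℂ))) = q.eval (y : ℂ) := by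
  refine ⟨∏ k ∈ Finset.range n,
    (Polynomial.C ((R : ℂ) - k) + Polynomial.X * Polynomial.C I), fun y => ?_⟩
  rw [Polynomial.eval_prod]
  refine Finset.prod_congr rfl fun k _ => ?_
  simp [zLine]
  ring

/-- The formal `n`-th derivative integrand. -/
noncomputable def auxF (v R : ℝ) (l : ℝ → ℝ) (n : ℕ) (s y : ℝ) : ℂ :=
  Complex.exp ((zLine R y - n) * (Real.log s : ℂ)) *
    ((∏ k ∈ Finset.range n, (zLine R y - (k : ℂ))) * auxK v R l y)

lemma aux_F_int (v R : ℝ) (hv : 0 < v) (l : ℝ → ℝ) (hl : Integrable l) (n : ℕ) (s : ℝ) :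
    Integrable (auxF v R l n s) := by
  obtain ⟨q, hq⟩ := aux_prod R n
  unfold auxF
  simp_rw [hq]
  refine (aux_int v R hv l hl q).bdd_mul (c := Real.exp ((R - n) * Real.log s)) ?_ ?_
  · unfold zLine
    exact Continuous.aestronglyMeasurable (by fun_prop)
  · refine Filter.Eventually.of_forall fun y => ?_
    rw [Complex.norm_exp]
    simp [zLine]

lemma aux_F_deriv (v R : ℝ) (hv : 0 < v) (l : ℝ → ℝ) (hl : Integrable l) (n : ℕ) (s : ℝ)
    (hs : 0 < s) :
    HasDerivAt (fun s => ∫ y, auxF v R l n s y) (∫ y, auxF v R l (n+1) s y) s := by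
  obtain ⟨q, hq⟩ := aux_prod R (n+1)
  set M : ℝ := max |Real.log (s/2)| |Real.log (2*s)|
  refine (hasDerivAt_integral_of_dominated_loc_of_deriv_le (F := auxF v R l n)
    (F' := auxF v R l (n+1)) (s := Ioo (s/2) (2*s))
    (bound := fun y : ℝ => Real.exp (|R - (n+1)| * M) * ‖q.eval (y : ℂ) * auxK v R l y‖)
    (Ioo_mem_nhds (half_lt_self hs) (by linarith)) ?_ (aux_F_int v R hv l hl n s)
    (aux_F_int v R hv l hl (n+1) s).aestronglyMeasurable ?_ ?_ ?_).2
  · exact Filter.Eventually.of_forall fun x => (aux_F_int v R hv l hl n x).aestronglyMeasurable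
  · refine Filter.Eventually.of_forall fun y x hx => ?_
    unfold auxF
    rw [hq, norm_mul]
    refine mul_le_mul_of_nonneg_right ?_ (norm_nonneg _)
    rw [Complex.norm_exp]
    refine Real.exp_le_exp.mpr ?_
    have e : ((zLine R y - ((n+1 : ℕ) : ℂ)) * (Real.log x : ℂ)).re = (R - (n+1)) * Real.log x := by
      rw [Complex.re_mul_ofReal]
      simp [zLine]
    rw [e]
    refine (le_abs_self _).trans ?_
    rw [abs_mul]
    refine mul_le_mul_of_nonneg_left ?_ (abs_nonneg _)
    have h0 : 0 < x := by linarith [hx.1]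
    have h1 : Real.log (s/2) ≤ Real.log x := Real.log_le_log (by linarith) hx.1.le
    have h2 : Real.log x ≤ Real.log (2*s) := Real.log_le_log h0 hx.2.le
    exact abs_le_max_abs_abs h1 h2
  · exact (aux_int v R hv l hl q).norm.const_mul _
  · refine Filter.Eventually.of_forall fun y x hx => ?_
    have h0 : 0 < x := by linarith [hx.1]
    have hlog : HasDerivAt (fun x : ℝ => (Real.log x : ℂ)) ((x⁻¹ : ℝ) : ℂ) x :=
      (Real.hasDerivAt_log h0.ne').ofReal_comp
    have h1 := ((hlog.const_mul (zLine R y - n)).cexp).mul_const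
      ((∏ k ∈ Finset.range n, (zLine R y - (k : ℂ))) * auxK v R l y)
    refine h1.congr_deriv ?_
    unfold auxF
    have e : (zLine R y - ((n+1 : ℕ) : ℂ)) * (Real.log x : ℂ)
        = (zLine R y - n) * (Real.log x : ℂ) + ((-Real.log x : ℝ) : ℂ) := by
      push_cast; ring
    rw [e, Complex.exp_add, ← Complex.ofReal_exp, Real.exp_neg, Real.exp_log h0,
      Finset.prod_range_succ]
    ring

lemma aux_greek (σ T R : ℝ) (l : ℝ → ℝ) (n : ℕ) (t s : ℝ) (hs : 0 < s) :
    cashGreek (σ^2) T R l n t s = (s : ℂ) ^ n * ∫ y, auxF (σ^2 * (T - t)) R l n s y := by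
  unfold cashGreek
  rw [← integral_const_mul]
  congr 1
  ext y
  unfold auxF auxK cpowR
  have e : zLine R y * (Real.log s : ℂ) =
      (zLine R y - n) * (Real.log s : ℂ) + ((n * Real.log s : ℝ) : ℂ) := by
    push_cast; ring
  have e2 : (((σ ^ 2 : ℝ) : ℂ) / 2) * zLine R y * (zLine R y - 1) * ((T : ℂ) - (t : ℂ)) =
      (((σ ^ 2 * (T - t) : ℝ) : ℂ) / 2) * zLine R y * (zLine R y - 1) := by
    push_cast; ring
  rw [e, e2, Complex.exp_add, ← Complex.ofReal_exp, Real.exp_nat_mul, Real.exp_log hs]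
  push_cast
  ring

lemma aux_inner (v R L x : ℝ) (hv : 0 < v) :
    ∫ y : ℝ, Complex.exp (zLine R y * (L : ℂ)) *
      Complex.exp (((v : ℂ) / 2) * zLine R y * (zLine R y - 1)) *
      Complex.exp (-(I * (x : ℂ) * (y : ℂ))) / (2 * (Real.pi : ℂ)) =
    (((Real.sqrt (2 * Real.pi * v))⁻¹ * Real.exp (-(x - (L - v/2)) ^ 2 / (2 * v)) *
      Real.exp (R * x) : ℝ) : ℂ) := by
  have hpi := Real.pi_pos
  rw [integral_div]
  have h := integral_cexp_quadratic (b := -((v/2 : ℝ) : ℂ)) (by simp; linarith)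
    (((L + v * (2 * R - 1) / 2 - x : ℝ) : ℂ) * I) ((R * L + v / 2 * (R ^ 2 - R) : ℝ) : ℂ)
  have e : ∀ y : ℝ, Complex.exp (zLine R y * (L : ℂ)) *
      Complex.exp (((v : ℂ) / 2) * zLine R y * (zLine R y - 1)) *
      Complex.exp (-(I * (x : ℂ) * (y : ℂ))) = Complex.exp (-((v/2 : ℝ) : ℂ) * (y : ℂ) ^ 2 +
        (((L + v * (2 * R - 1) / 2 - x : ℝ) : ℂ) * I) * y + ((R * L + v / 2 * (R ^ 2 - R) : ℝ) : ℂ)) := by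
    intro y
    rw [← Complex.exp_add, ← Complex.exp_add, aux_norm_exp]
    unfold zLine
    congr 1
    push_cast
    ring
  simp_rw [e]
  rw [h]
  have e3 : ((Real.pi : ℂ) / - -((v/2 : ℝ) : ℂ)) ^ (1 / 2 : ℂ) =
      ((Real.sqrt (Real.pi / (v/2)) : ℝ) : ℂ) := by
    rw [Real.sqrt_eq_rpow, Complex.ofReal_cpow (by positivity)]
    push_cast
    simp
  have e4 : (((R * L + v / 2 * (R ^ 2 - R) : ℝ) : ℂ) -
      (((L + v * (2 * R - 1) / 2 - x : ℝ) : ℂ) * I) ^ 2 / (4 * -((v/2 : ℝ) : ℂ))) =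
      ((-(x - (L - v/2)) ^ 2 / (2 * v) + R * x : ℝ) : ℂ) := by
    have hvc : (v : ℂ) ≠ 0 := by exact_mod_cast hv.ne'
    rw [mul_pow, I_sq]
    push_cast
    field_simp
    ring
  rw [e3, e4, ← Complex.ofReal_exp, Real.exp_add]
  have e5 : Real.sqrt (Real.pi / (v/2)) = (2 * Real.pi) * (Real.sqrt (2 * Real.pi * v))⁻¹ := by
    have h1 : Real.pi / (v/2) = (2 * Real.pi)^2 / (2 * Real.pi * v) := by
      field_simp
    rw [h1, Real.sqrt_div (by positivity), Real.sqrt_sq (by positivity)]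
    rfl
  rw [e5]
  have hpc : (Real.pi : ℂ) ≠ 0 := by exact_mod_cast hpi.ne'
  push_cast
  field_simp

lemma aux_price (σ T : ℝ) (f : ℝ → ℝ) (R : ℝ)
    (l : ℝ → ℝ) (hl : l = fun x => f (Real.exp x) * Real.exp (-R * x))
    (hlint : Integrable l) (t s : ℝ) (hv : 0 < σ ^ 2 * (T - t)) (hs : 0 < s) :
    (BSprice σ T f t s : ℂ) = ∫ y, auxF (σ^2 * (T - t)) R l 0 s y := by
  set v := σ ^ 2 * (T - t) with hvdef
  set L := Real.log s with hL
  have key : ∫ y, auxF v R l 0 s y = ∫ x : ℝ, (((Real.sqrt (2 * Real.pi * v))⁻¹ *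
      Real.exp (-(x - (L - v/2)) ^ 2 / (2 * v)) * Real.exp (R * x) : ℝ) : ℂ) * (l x : ℂ) := by
    simp_rw [← fun x => aux_inner v R L x hv, ← integral_mul_const]
    rw [← integral_integral_swap]
    · congr 1
      ext y
      unfold auxF auxK pCoef lhat
      simp only [Finset.range_zero, Finset.prod_empty, one_mul, Nat.cast_zero, sub_zero]
      rw [← integral_div, ← integral_const_mul, ← integral_const_mul]
      congr 1
      ext x
      ring
    · have hg : Integrable (fun y : ℝ => ((Real.exp (-(v/2) * y ^ 2) : ℝ) : ℂ)) := by
        simpa using aux_poly_gauss (v/2) (by positivity) 1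
      have h := (hg.mul_prod (hlint.ofReal (𝕜 := ℂ))).bdd_mul
        (c := Real.exp (R * L + v / 2 * (R ^ 2 - R)) / (2 * Real.pi))
        (f := fun z : ℝ × ℝ => Complex.exp (((R * L + v / 2 * (R ^ 2 - R) : ℝ) : ℂ) +
          ((z.1 * L + v / 2 * (2 * R - 1) * z.1 - z.2 * z.1 : ℝ) : ℂ) * I) / (2 * (Real.pi : ℂ)))
        (Continuous.aestronglyMeasurable (by fun_prop)) ?_
      · refine h.congr (Filter.Eventually.of_forall fun z => ?_)
        simp only [Function.uncurry]
        rw [← Complex.exp_add, ← Complex.exp_add, aux_norm_exp, Complex.ofReal_exp]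
        have aux : ∀ A B D c d : ℂ, A + B = D →
            cexp A / d * (cexp B * c) = cexp D / d * c := by
          rintro A B _ c d rfl
          rw [Complex.exp_add]
          ring
        apply aux
        unfold zLine
        push_cast
        ring
      · refine Filter.Eventually.of_forall fun z => ?_
        rw [norm_div, Complex.norm_exp]
        have e2 : ‖(2 * (Real.pi : ℂ))‖ = 2 * Real.pi := by
          simp [abs_of_pos Real.pi_pos]
        rw [e2]
        refine le_of_eq ?_
        congr 2
        simp [-Complex.ofReal_add, -Complex.ofReal_mul, -Complex.ofReal_sub]
  rw [key]
  unfold BSprice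
  rw [← hvdef, integral_gaussianReal_eq_integral_smul (by simpa using hv)]
  rw [← integral_sub_right_eq_self _ (L - v/2)]
  simp_rw [← Complex.ofReal_mul]
  rw [integral_complex_ofReal]
  congr 2
  ext x
  rw [hl]
  simp only [gaussianPDFReal, smul_eq_mul, sub_zero, Real.coe_toNNReal _ hv.le]
  have e1 : s * Real.exp (-(σ ^ 2 / 2) * (T - t) + (x - (L - v / 2))) = Real.exp x := by
    conv_lhs => rw [← Real.exp_log hs]
    rw [← Real.exp_add]
    congr 1
    rw [hvdef, ← hL]
    ring
  have e2 : Real.exp (R * x) * Real.exp (-R * x) = 1 := by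
    rw [← Real.exp_add]; simp
  rw [e1]
  linear_combination (-(Real.sqrt (2 * Real.pi * v))⁻¹ *
      Real.exp (-(x - (L - v/2)) ^ 2 / (2 * v)) * f (Real.exp x)) * e2

/-- integral representation and smoothness of the Black-Scholes price and
its cash greeks. -/
theorem BSprice_integral_representation_and_cash_greeks
    (σ T : ℝ) (hσ : 0 < σ) (hT : 0 < T)
    (f : ℝ → ℝ) (R : ℝ) (hR : R ≠ 0)
    (hf : ContDiffOn ℝ (⊤ : ℕ∞) f (Set.Ioi 0))
    (l : ℝ → ℝ) (hl : l = fun x => f (Real.exp x) * Real.exp (-R * x))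
    (hlint : ∀ n : ℕ, Integrable (iteratedDeriv n l)) :
    ∀ t ∈ Set.Ico 0 T,
      (∀ s : ℝ, 0 < s → (BSprice σ T f t s : ℂ) = cashGreek (σ ^ 2) T R l 0 t s) ∧
      ContDiffOn ℝ (⊤ : ℕ∞) (fun s => BSprice σ T f t s) (Set.Ioi 0) ∧
      (∀ n : ℕ, 1 ≤ n → ∀ s : ℝ, 0 < s →
        ((s ^ n * iteratedDerivWithin n (fun s => BSprice σ T f t s) (Set.Ioi 0) s : ℝ) : ℂ) =
          cashGreek (σ ^ 2) T R l n t s) := by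
  intro t ht
  have hv : 0 < σ ^ 2 * (T - t) := mul_pos (by positivity) (by linarith [ht.2])
  have hl0 : Integrable l := by simpa using hlint 0
  set G : ℕ → ℝ → ℂ := fun n s => ∫ y, auxF (σ^2 * (T - t)) R l n s y with hG
  have hder : ∀ n s, 0 < s → HasDerivAt (G n) (G (n+1) s) s :=
    fun n s hs => aux_F_deriv _ R hv l hl0 n s hs
  have h0 : ∀ s, 0 < s → (BSprice σ T f t s : ℂ) = G 0 s :=
    fun s hs => aux_price σ T f R l hl hl0 t s hv hs
  have step : ∀ (n : ℕ) (h : ℝ → ℝ), (∀ s, 0 < s → (h s : ℂ) = G n s) → ∀ s, 0 < s →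
      ∃ d : ℝ, HasDerivAt h d s ∧ (d : ℂ) = G (n+1) s := by
    intro n h hh s hs
    have hev : ∀ᶠ x in nhds s, (h x : ℂ) = G n x := by
      filter_upwards [Ioi_mem_nhds hs] with x hx using hh x hx
    have hd : HasDerivAt (fun x => (h x : ℂ)) (G (n+1) s) s :=
      (hder n s hs).congr_of_eventuallyEq hev
    have hre : HasDerivAt h (G (n+1) s).re s := by
      have := Complex.reCLM.hasFDerivAt.comp_hasDerivAt s hd
      exact this
    refine ⟨_, hre, ?_⟩
    exact hre.ofReal_comp.unique hd
  have hit : ∀ n : ℕ, ∀ s : ℝ, 0 < s →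
      ((iteratedDerivWithin n (fun s => BSprice σ T f t s) (Set.Ioi 0) s : ℝ) : ℂ) = G n s := by
    intro n
    induction n with
    | zero => intro s hs; simpa using h0 s hs
    | succ n ih =>
      intro s hs
      obtain ⟨d, hd, hd'⟩ := step n _ ih s hs
      rw [iteratedDerivWithin_succ, hd.hasDerivWithinAt.derivWithin
        (isOpen_Ioi.uniqueDiffWithinAt hs), hd']
  refine ⟨?_, ?_, ?_⟩
  · intro s hs
    rw [aux_greek σ T R l 0 t s hs, h0 s hs]
    simp [hG]
  · refine contDiffOn_of_differentiableOn_deriv fun m _ s hs => ?_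
    obtain ⟨d, hd, _⟩ := step m _ (hit m) s hs
    exact hd.differentiableAt.differentiableWithinAt
  · intro n _ s hs
    rw [aux_greek σ T R l n t s hs, Complex.ofReal_mul, hit n s hs, Complex.ofReal_pow]
end

section
/- With the Lévy–Khintchine data (μ, c, K) and κ as defined, the map (λ,z) ↦ κ(λ,z) on [0,1] × {z ∈ ℂ : Re z ∈ {0, R, 2R}} is twice partially differentiable with respect to λ, the maps κ, ∂_λκ and ∂²_λκ are jointly continuous, and for all λ ∈ [0,1] and such z: ∂_λκ(λ,z) = ½z³·∫(∫₀¹ x³·e^{uλzx}·(1−u)²·(1+λzxu) du) K(dx) and ∂²_λκ(λ,z) = ½z⁴·∫(∫₀¹ x⁴·e^{uλzx}·u(1−u)²·(2+λzxu) du) K(dx). In particular, κ(0,z) = μz + ½σ²z², ∂_λκ(0,z) = (1/6)·m₃·z³ and ∂²_λκ(0,z) = (1/12)·m₄·z⁴, where m₃ := ∫ x³ K(dx), m₄ := ∫ x⁴ K(dx). -/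
open MeasureTheory Complex Set

/-- Cumulant generating function `κ(λ, z)` of the interpolating family. -/
noncomputable def kappa (μ c : ℝ) (K : Measure ℝ) (lam : ℝ) (z : ℂ) : ℂ :=
  if lam = 0 then (μ : ℂ) * z + (((c + ∫ x : ℝ, x ^ 2 ∂K) : ℝ) : ℂ) / 2 * z ^ 2
  else (μ : ℂ) * z + (c : ℂ) / 2 * z ^ 2 +
    ((lam : ℂ) ^ 2)⁻¹ *
      ∫ x : ℝ, (Complex.exp ((lam : ℂ) * z * (x : ℂ)) - 1 - (lam : ℂ) * z * (x : ℂ)) ∂K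

noncomputable def kbar (μ c : ℝ) (K : Measure ℝ) (lam : ℝ) (y z : ℂ) : ℂ :=
  kappa μ c K lam (y + z) - kappa μ c K lam y - kappa μ c K lam z

noncomputable def gamLK (μ c : ℝ) (K : Measure ℝ) (lam : ℝ) (z : ℂ) : ℂ :=
  kbar μ c K lam z 1 / kbar μ c K lam 1 1

noncomputable def etaLK (μ c : ℝ) (K : Measure ℝ) (lam : ℝ) (z : ℂ) : ℂ :=
  kappa μ c K lam z - kappa μ c K lam 1 * gamLK μ c K lam z

/-- First partial derivative of `κ` in `λ` (explicit integral formula). -/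
noncomputable def kappaD1 (K : Measure ℝ) (lam : ℝ) (z : ℂ) : ℂ :=
  (1 / 2 : ℂ) * z ^ 3 *
    ∫ x : ℝ,
      (∫ u in (0 : ℝ)..1,
        (x : ℂ) ^ 3 * Complex.exp ((u : ℂ) * (lam : ℂ) * z * (x : ℂ)) *
          ((1 : ℂ) - (u : ℂ)) ^ 2 * (1 + (lam : ℂ) * z * (x : ℂ) * (u : ℂ))) ∂K

/-- Second partial derivative of `κ` in `λ` (explicit integral formula). -/
noncomputable def kappaD2 (K : Measure ℝ) (lam : ℝ) (z : ℂ) : ℂ :=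
  (1 / 2 : ℂ) * z ^ 4 *
    ∫ x : ℝ,
      (∫ u in (0 : ℝ)..1,
        (x : ℂ) ^ 4 * Complex.exp ((u : ℂ) * (lam : ℂ) * z * (x : ℂ)) *
          (u : ℂ) * ((1 : ℂ) - (u : ℂ)) ^ 2 * (2 + (lam : ℂ) * z * (x : ℂ) * (u : ℂ))) ∂K

noncomputable def phiLK (k : ℕ) (w : ℂ) : ℂ :=
  ∫ u in (0 : ℝ)..1, (u : ℂ) ^ k * (1 - (u : ℂ)) * Complex.exp ((u : ℂ) * w)

lemma norm_exp_le_aux (u : ℝ) (hu0 : 0 ≤ u) (hu1 : u ≤ 1) (w : ℂ) :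
    ‖Complex.exp ((u : ℂ) * w)‖ ≤ 1 + Real.exp w.re := by
  rw [Complex.norm_exp, Complex.re_ofReal_mul]
  rcases le_total w.re 0 with h | h
  · have : Real.exp (u * w.re) ≤ 1 := Real.exp_le_one_iff.2 (mul_nonpos_of_nonneg_of_nonpos hu0 h)
    linarith [Real.exp_pos w.re]
  · have : Real.exp (u * w.re) ≤ Real.exp w.re :=
      Real.exp_le_exp.2 (mul_le_of_le_one_left h hu1)
    linarith

lemma norm_integrand_le_aux (k : ℕ) (u : ℝ) (hu0 : 0 ≤ u) (hu1 : u ≤ 1) (w : ℂ) :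
    ‖(u : ℂ) ^ k * (1 - (u : ℂ)) * Complex.exp ((u : ℂ) * w)‖ ≤ 1 + Real.exp w.re := by
  rw [norm_mul, norm_mul, norm_pow, Complex.norm_real, Real.norm_eq_abs, abs_of_nonneg hu0]
  have h1 : ‖(1 - (u : ℂ))‖ ≤ 1 := by
    rw [← Complex.ofReal_one, ← Complex.ofReal_sub, Complex.norm_real, Real.norm_eq_abs,
      abs_le]
    constructor <;> linarith
  have h2 : u ^ k ≤ 1 := pow_le_one₀ hu0 hu1
  have h3 : u ^ k * ‖(1 - (u : ℂ))‖ ≤ 1 := mul_le_one₀ h2 (norm_nonneg _) h1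
  calc _ ≤ 1 * ‖Complex.exp ((u : ℂ) * w)‖ := by gcongr
    _ ≤ _ := by rw [one_mul]; exact norm_exp_le_aux u hu0 hu1 w

lemma norm_phiLK_le (k : ℕ) (w : ℂ) : ‖phiLK k w‖ ≤ 1 + Real.exp w.re := by
  have := intervalIntegral.norm_integral_le_of_norm_le_const (a := (0:ℝ)) (b := 1)
    (f := fun u : ℝ => (u : ℂ) ^ k * (1 - (u : ℂ)) * Complex.exp ((u : ℂ) * w))
    (C := 1 + Real.exp w.re) (by
      intro u hu
      rw [uIoc_of_le zero_le_one] at hu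
      exact norm_integrand_le_aux k u hu.1.le hu.2 w)
  simpa [phiLK] using this

lemma hasDerivAt_phiLK (k : ℕ) (w : ℂ) : HasDerivAt (phiLK k) (phiLK (k + 1) w) w := by
  have hc : ∀ (k : ℕ) (w : ℂ), Continuous
      (fun u : ℝ => (u : ℂ) ^ k * (1 - (u : ℂ)) * Complex.exp ((u : ℂ) * w)) := by
    intro k w; fun_prop
  refine (intervalIntegral.hasDerivAt_integral_of_dominated_loc_of_deriv_le
    (F := fun (w : ℂ) (u : ℝ) => (u : ℂ) ^ k * (1 - (u : ℂ)) * Complex.exp ((u : ℂ) * w))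
    (F' := fun (w : ℂ) (u : ℝ) => (u : ℂ) ^ (k+1) * (1 - (u : ℂ)) * Complex.exp ((u : ℂ) * w))
    (bound := fun _ => 1 + Real.exp (w.re + 1)) (μ := volume) (a := 0) (b := 1)
    (s := Metric.ball w 1) (x₀ := w)
    (Metric.ball_mem_nhds w one_pos) ?_ ?_ ?_ ?_ ?_ ?_).2
  · exact Filter.Eventually.of_forall fun w => (hc k w).aestronglyMeasurable
  · exact (hc k w).intervalIntegrable _ _
  · exact (hc (k+1) w).aestronglyMeasurable
  · refine Filter.Eventually.of_forall fun u hu v hv => ?_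
    rw [uIoc_of_le zero_le_one] at hu
    refine (norm_integrand_le_aux (k+1) u hu.1.le hu.2 v).trans ?_
    have h1 : |(v - w).re| ≤ ‖v - w‖ := Complex.abs_re_le_norm _
    have h2 : ‖v - w‖ < 1 := by simpa [dist_eq_norm] using hv
    have h3 : v.re ≤ w.re + 1 := by
      have := (abs_le.1 (h1.trans h2.le)).2
      rw [Complex.sub_re] at this; linarith
    gcongr
  · exact intervalIntegrable_const
  · refine Filter.Eventually.of_forall fun u hu v hv => ?_
    have h := (((hasDerivAt_id v).const_mul (u : ℂ)).cexp).const_mul ((u : ℂ) ^ k * (1 - (u : ℂ)))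
    refine HasDerivAt.congr_deriv h ?_
    simp only [id]; ring

lemma continuous_phiLK (k : ℕ) : Continuous (phiLK k) :=
  continuous_iff_continuousAt.2 fun w => (hasDerivAt_phiLK k w).continuousAt

lemma phiLK_zero_eq (w : ℂ) : Complex.exp w - 1 - w = w ^ 2 * phiLK 0 w := by
  have h : ∀ u ∈ uIcc (0:ℝ) 1, HasDerivAt
      (fun u : ℝ => (1 - (u : ℂ)) * Complex.exp ((u : ℂ) * w) * w + Complex.exp ((u : ℂ) * w))
      (w ^ 2 * ((u : ℂ) ^ 0 * (1 - (u : ℂ)) * Complex.exp ((u : ℂ) * w))) u := by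
    intro u _
    have h1 : HasDerivAt (fun u : ℝ => (u : ℂ)) 1 u := Complex.ofRealCLM.hasDerivAt
    have h2 := (h1.mul_const w).cexp
    refine HasDerivAt.congr_deriv ((((h1.const_sub 1).mul h2).mul_const w).add h2) ?_
    ring
  have := intervalIntegral.integral_eq_sub_of_hasDerivAt h
    (Continuous.intervalIntegrable (by fun_prop) _ _)
  rw [intervalIntegral.integral_const_mul] at this
  rw [phiLK, this]; simp; ring

lemma byparts_aux (k : ℕ) (w : ℂ) :
    ∫ u in (0:ℝ)..1, Complex.exp ((u : ℂ) * w) * (u : ℂ) ^ k * (1 - (u : ℂ)) ^ 2 *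
      ((k + 1) + w * (u : ℂ)) = 2 * phiLK (k + 1) w := by
  have h : ∀ u ∈ uIcc (0:ℝ) 1, HasDerivAt
      (fun u : ℝ => (1 - (u : ℂ)) ^ 2 * (u : ℂ) ^ (k + 1) * Complex.exp ((u : ℂ) * w))
      (Complex.exp ((u : ℂ) * w) * (u : ℂ) ^ k * (1 - (u : ℂ)) ^ 2 *
      ((k + 1) + w * (u : ℂ)) -
      2 * ((u : ℂ) ^ (k + 1) * (1 - (u : ℂ)) * Complex.exp ((u : ℂ) * w))) u := by
    intro u _
    have h1 : HasDerivAt (fun u : ℝ => (u : ℂ)) 1 u := Complex.ofRealCLM.hasDerivAt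
    have h2 := (h1.mul_const w).cexp
    refine HasDerivAt.congr_deriv ((((h1.const_sub 1).pow 2).mul (h1.pow (k+1))).mul h2) ?_
    simp; ring
  have := intervalIntegral.integral_eq_sub_of_hasDerivAt h
    (Continuous.intervalIntegrable (by fun_prop) _ _)
  rw [intervalIntegral.integral_sub (Continuous.intervalIntegrable (by fun_prop) _ _)
    (Continuous.intervalIntegrable (by fun_prop) _ _),
    intervalIntegral.integral_const_mul] at this
  rw [phiLK, ← sub_eq_zero, this]; simp

noncomputable def PhiLK (K : Measure ℝ) (k : ℕ) (l : ℝ) (z : ℂ) : ℂ :=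
  ∫ x : ℝ, (x : ℂ) ^ (k + 2) * phiLK k ((l : ℂ) * z * (x : ℂ)) ∂K

lemma kappaD1_eq (K : Measure ℝ) (l : ℝ) (z : ℂ) : kappaD1 K l z = z ^ 3 * PhiLK K 1 l z := by
  have : ∀ x : ℝ, (∫ u in (0 : ℝ)..1,
        (x : ℂ) ^ 3 * Complex.exp ((u : ℂ) * (l : ℂ) * z * (x : ℂ)) *
          ((1 : ℂ) - (u : ℂ)) ^ 2 * (1 + (l : ℂ) * z * (x : ℂ) * (u : ℂ))) =
      2 * ((x : ℂ) ^ (1 + 2) * phiLK 1 ((l : ℂ) * z * (x : ℂ))) := by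
    intro x
    have h := byparts_aux 0 ((l : ℂ) * z * (x : ℂ))
    rw [mul_left_comm, ← h, ← intervalIntegral.integral_const_mul]
    congr 1; ext u
    simp only [mul_assoc]; simp
  rw [kappaD1, PhiLK]
  simp_rw [this]
  rw [integral_const_mul]; ring

lemma kappaD2_eq (K : Measure ℝ) (l : ℝ) (z : ℂ) : kappaD2 K l z = z ^ 4 * PhiLK K 2 l z := by
  have : ∀ x : ℝ, (∫ u in (0 : ℝ)..1,
        (x : ℂ) ^ 4 * Complex.exp ((u : ℂ) * (l : ℂ) * z * (x : ℂ)) *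
          (u : ℂ) * ((1 : ℂ) - (u : ℂ)) ^ 2 * (2 + (l : ℂ) * z * (x : ℂ) * (u : ℂ))) =
      2 * ((x : ℂ) ^ (2 + 2) * phiLK 2 ((l : ℂ) * z * (x : ℂ))) := by
    intro x
    have h := byparts_aux 1 ((l : ℂ) * z * (x : ℂ))
    rw [mul_left_comm, ← h, ← intervalIntegral.integral_const_mul]
    congr 1; ext u
    simp only [mul_assoc]; norm_num
  rw [kappaD2, PhiLK]
  simp_rw [this]
  rw [integral_const_mul]; ring

lemma phiLK_at_zero_val : phiLK 0 0 = 1 / 2 ∧ phiLK 1 0 = 1 / 6 ∧ phiLK 2 0 = 1 / 12 := by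
  have key : ∀ k : ℕ, phiLK k 0 = ((∫ u in (0:ℝ)..1, (u ^ k - u ^ (k + 1)) : ℝ) : ℂ) := by
    intro k
    rw [phiLK, ← intervalIntegral.integral_ofReal]
    congr 1; ext u; push_cast; simp; ring
  have k2 : ∀ k : ℕ, phiLK k 0 = (((1 / (k + 1) - 1 / (k + 2) : ℝ)) : ℂ) := by
    intro k
    rw [key, intervalIntegral.integral_sub (Continuous.intervalIntegrable (by fun_prop) _ _)
      (Continuous.intervalIntegrable (by fun_prop) _ _), integral_pow, integral_pow]
    push_cast; simp; ring
  refine ⟨?_, ?_, ?_⟩ <;> rw [k2] <;> norm_num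

lemma PhiLK_at_zero (K : Measure ℝ) (k : ℕ) (z : ℂ) :
    PhiLK K k 0 z = (((∫ x : ℝ, x ^ (k + 2) ∂K) : ℝ) : ℂ) * phiLK k 0 := by
  rw [PhiLK, ← integral_complex_ofReal, ← integral_mul_const]
  congr 1; ext x; simp

lemma kappa_eq (μ c : ℝ) (K : Measure ℝ) (l : ℝ) (z : ℂ) :
    kappa μ c K l z = (μ : ℂ) * z + (c : ℂ) / 2 * z ^ 2 + z ^ 2 * PhiLK K 0 l z := by
  rw [kappa]
  split_ifs with h
  · subst h
    rw [PhiLK_at_zero, phiLK_at_zero_val.1]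
    push_cast; ring
  · have hl : (l : ℂ) ≠ 0 := by exact_mod_cast h
    congr 1
    rw [PhiLK, ← integral_const_mul, ← integral_const_mul]
    congr 1; ext x
    rw [phiLK_zero_eq, zero_add]
    field_simp

/-- dominating function -/
noncomputable def BLK (R ε x : ℝ) : ℝ := Real.exp (ε * |x|) * (1 + Real.exp (2 * R * x))

lemma exp_abs_le (ε x : ℝ) (hε : 0 ≤ ε) : Real.exp (ε * |x|) ≤ Real.exp (ε * x) + Real.exp (-ε * x) := by
  rcases abs_cases x with ⟨h, _⟩ | ⟨h, _⟩ <;> rw [h]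
  · linarith [Real.exp_pos (-ε * x)]
  · rw [mul_neg, ← neg_mul]; linarith [Real.exp_pos (ε * x)]

lemma integrable_BLK (K : Measure ℝ)
    (hKmin : ∫⁻ x : ℝ, ENNReal.ofReal (min 1 (x ^ 2)) ∂K ≠ ⊤)
    (R a b ε : ℝ) (hε : 0 < ε)
    (hKexp : ∀ s ∈ Set.Ioo a b,
      ∫⁻ x in {x : ℝ | 1 ≤ |x|}, ENNReal.ofReal (Real.exp (s * x)) ∂K ≠ ⊤)
    (h1 : 2 * ε ∈ Ioo a b) (h2 : -(2 * ε) ∈ Ioo a b)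
    (h3 : 2 * R + 2 * ε ∈ Ioo a b) (h4 : 2 * R - 2 * ε ∈ Ioo a b) (k : ℕ) :
    Integrable (fun x : ℝ => |x| ^ (k + 2) * (2 * BLK R ε x)) K := by
  have hmeas : Measurable (fun x : ℝ => |x| ^ (k + 2) * (2 * BLK R ε x)) := by
    unfold BLK; fun_prop
  have hS : MeasurableSet {x : ℝ | 1 ≤ |x|} := measurableSet_le (by fun_prop) (by fun_prop)
  have hI : ∀ s ∈ Ioo a b, IntegrableOn (fun x : ℝ => Real.exp (s * x)) {x : ℝ | 1 ≤ |x|} K := by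
    intro s hs
    refine ⟨by fun_prop, ?_⟩
    rw [hasFiniteIntegral_iff_ofReal (Filter.Eventually.of_forall fun x => (Real.exp_pos _).le)]
    exact (hKexp s hs).lt_top
  have hM : Integrable (fun x : ℝ => min 1 (x ^ 2)) K := by
    refine ⟨by fun_prop, ?_⟩
    rw [hasFiniteIntegral_iff_ofReal (Filter.Eventually.of_forall fun x => by positivity)]
    exact hKmin.lt_top
  rw [← integrableOn_univ, ← union_compl_self {x : ℝ | 1 ≤ |x|}]
  refine IntegrableOn.union ?_ ?_
  · have hsum := (((hI _ h1).add (hI _ h2)).add ((hI _ h3).add (hI _ h4))).const_mul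
      (2 * ((k + 2).factorial / ε ^ (k + 2)))
    refine Integrable.mono' hsum hmeas.aestronglyMeasurable (Filter.Eventually.of_forall ?_)
    intro x
    have hB : 0 ≤ BLK R ε x := by unfold BLK; positivity
    rw [Real.norm_of_nonneg (by positivity)]
    have hp := Real.pow_div_factorial_le_exp (ε * |x|) (by positivity) (k + 2)
    have hp' : |x| ^ (k + 2) ≤ ((k + 2).factorial / ε ^ (k + 2)) * Real.exp (ε * |x|) := by
      rw [mul_pow] at hp
      rw [div_le_iff₀ (by positivity)] at hp
      rw [div_mul_eq_mul_div, le_div_iff₀ (by positivity)]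
      linarith
    have he := exp_abs_le (2 * ε) x (by positivity)
    have e1 : Real.exp (ε * |x|) * Real.exp (ε * |x|) = Real.exp (2 * ε * |x|) := by
      rw [← Real.exp_add]; ring_nf
    have e2 : Real.exp ((2 * R + 2 * ε) * x) = Real.exp (2 * ε * x) * Real.exp (2 * R * x) := by
      rw [← Real.exp_add]; ring_nf
    have e3 : Real.exp ((2 * R - 2 * ε) * x) = Real.exp (-(2 * ε) * x) * Real.exp (2 * R * x) := by
      rw [← Real.exp_add]; ring_nf
    calc |x| ^ (k + 2) * (2 * BLK R ε x)
        ≤ ((k + 2).factorial / ε ^ (k + 2)) * Real.exp (ε * |x|) * (2 * BLK R ε x) := by gcongr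
      _ = 2 * ((k + 2).factorial / ε ^ (k + 2)) *
          (Real.exp (2 * ε * |x|) * (1 + Real.exp (2 * R * x))) := by
          rw [← e1, BLK]; ring
      _ ≤ 2 * ((k + 2).factorial / ε ^ (k + 2)) *
          ((Real.exp (2 * ε * x) + Real.exp (-(2 * ε) * x)) * (1 + Real.exp (2 * R * x))) := by
          gcongr
      _ = _ := by
          simp only [Pi.add_apply]
          rw [e2, e3]; ring
  · have hm := (hM.const_mul (2 * (Real.exp ε * (1 + Real.exp (2 * |R|))))).integrableOn
      (s := {x : ℝ | 1 ≤ |x|}ᶜ)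
    refine Integrable.mono' hm hmeas.aestronglyMeasurable ?_
    refine (ae_restrict_iff' hS.compl).2 (Filter.Eventually.of_forall ?_)
    intro x hx
    have hx1 : |x| ≤ 1 := by
      simp only [mem_compl_iff, mem_setOf_eq, not_le] at hx; exact hx.le
    have hB : 0 ≤ BLK R ε x := by unfold BLK; positivity
    rw [Real.norm_of_nonneg (by positivity)]
    have hBle : BLK R ε x ≤ Real.exp ε * (1 + Real.exp (2 * |R|)) := by
      unfold BLK
      have : 2 * R * x ≤ 2 * |R| := by
        have := le_abs_self (R * x)
        rw [abs_mul] at this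
        nlinarith [abs_nonneg R]
      have : ε * |x| ≤ ε := by nlinarith
      gcongr
    have hxp : |x| ^ (k + 2) ≤ min 1 (x ^ 2) := by
      refine le_min (pow_le_one₀ (abs_nonneg x) hx1) ?_
      rw [← sq_abs x]
      exact pow_le_pow_of_le_one (abs_nonneg x) hx1 (by omega)
    calc _ ≤ min 1 (x ^ 2) * (2 * (Real.exp ε * (1 + Real.exp (2 * |R|)))) := by gcongr
      _ = _ := by ring

lemma integrand_bound (R ε : ℝ) (hε : 0 ≤ ε) (k : ℕ) (n : ℕ) (l l' : ℝ) (hl' : l' ∈ Icc (0:ℝ) 1) (z : ℂ)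
    (hz : z.re ∈ ({0, R, 2 * R} : Set ℝ)) (hll : |l - l'| * (2 * |R|) ≤ ε) (x : ℝ) :
    ‖(x : ℂ) ^ n * phiLK k ((l : ℂ) * z * (x : ℂ))‖ ≤ |x| ^ n * (2 * BLK R ε x) := by
  rw [norm_mul, norm_pow, Complex.norm_real, Real.norm_eq_abs]
  gcongr
  refine (norm_phiLK_le _ _).trans ?_
  have hre : ((l : ℂ) * z * (x : ℂ)).re = l * z.re * x := by
    rw [Complex.re_mul_ofReal, Complex.re_ofReal_mul]
  rw [hre]
  obtain ⟨t, ht0, ht1, ht⟩ : ∃ t : ℝ, 0 ≤ t ∧ t ≤ 1 ∧ z.re = t * (2 * R) := by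
    rcases hz with h | h | h
    · exact ⟨0, by norm_num, by norm_num, by rw [h]; ring⟩
    · exact ⟨1/2, by norm_num, by norm_num, by rw [h]; ring⟩
    · exact ⟨1, by norm_num, by norm_num, by rw [h]; ring⟩
  have h1 : (l - l') * z.re * x ≤ ε * |x| := by
    refine (le_abs_self _).trans ?_
    rw [abs_mul, abs_mul, ht, abs_mul, abs_mul, abs_of_nonneg ht0, abs_two]
    gcongr
    refine le_trans ?_ hll
    exact mul_le_mul_of_nonneg_left (mul_le_of_le_one_left (by positivity) ht1) (abs_nonneg _)
  have h2 : Real.exp (l' * z.re * x) ≤ 1 + Real.exp (2 * R * x) := by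
    have := norm_exp_le_aux (l' * t) (mul_nonneg hl'.1 ht0) (mul_le_one₀ hl'.2 ht0 ht1)
      ((2 * R * x : ℝ) : ℂ)
    rw [← Complex.ofReal_mul, Complex.norm_exp, Complex.ofReal_re, Complex.ofReal_re] at this
    rw [ht]; convert this using 2; ring
  have h3 : Real.exp (l * z.re * x) ≤ BLK R ε x := by
    have : l * z.re * x = (l - l') * z.re * x + l' * z.re * x := by ring
    rw [this, Real.exp_add, BLK]
    gcongr
  have h4 : 1 ≤ BLK R ε x := by
    unfold BLK
    have : 1 ≤ Real.exp (ε * |x|) := Real.one_le_exp (by positivity)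
    nlinarith [Real.exp_pos (2 * R * x)]
  linarith

lemma continuousOn_PhiLK (K : Measure ℝ) (R ε : ℝ) (hε : 0 < ε) (k : ℕ)
    (hint : ∀ k : ℕ, Integrable (fun x : ℝ => |x| ^ (k + 2) * (2 * BLK R ε x)) K) :
    ContinuousOn (fun q : ℝ × ℂ => PhiLK K k q.1 q.2)
      (Set.Icc 0 1 ×ˢ {z : ℂ | z.re ∈ ({0, R, 2 * R} : Set ℝ)}) := by
  have hφ := continuous_phiLK k
  refine continuousOn_of_dominated (bound := fun x : ℝ => |x| ^ (k + 2) * (2 * BLK R ε x))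
    ?_ ?_ (hint k) ?_
  · intro q _
    exact Continuous.aestronglyMeasurable (by fun_prop)
  · intro q hq
    exact Filter.Eventually.of_forall fun x =>
      integrand_bound R ε hε.le k (k+2) q.1 q.1 hq.1 q.2 hq.2 (by simpa using hε.le) x
  · exact Filter.Eventually.of_forall fun x => Continuous.continuousOn (by fun_prop)

lemma hasDerivAt_PhiLK (K : Measure ℝ) (R ε : ℝ) (hε : 0 < ε) (k : ℕ)
    (hint : ∀ k : ℕ, Integrable (fun x : ℝ => |x| ^ (k + 2) * (2 * BLK R ε x)) K)
    (l : ℝ) (hl : l ∈ Icc (0:ℝ) 1) (z : ℂ) (hz : z.re ∈ ({0, R, 2 * R} : Set ℝ)) :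
    HasDerivAt (fun l => PhiLK K k l z) (z * PhiLK K (k + 1) l z) l := by
  have hφ := continuous_phiLK k
  have hφ' := continuous_phiLK (k + 1)
  have hδ : 0 < ε / (2 * |R| + 1) := by positivity
  have := (hasDerivAt_integral_of_dominated_loc_of_deriv_le (μ := K) (𝕜 := ℝ)
    (F := fun (l : ℝ) (x : ℝ) => (x : ℂ) ^ (k + 2) * phiLK k ((l : ℂ) * z * (x : ℂ)))
    (F' := fun (l : ℝ) (x : ℝ) =>
      z * ((x : ℂ) ^ (k + 1 + 2) * phiLK (k + 1) ((l : ℂ) * z * (x : ℂ))))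
    (bound := fun x : ℝ => ‖z‖ * (|x| ^ (k + 1 + 2) * (2 * BLK R ε x)))
    (s := Metric.ball l (ε / (2 * |R| + 1))) (x₀ := l)
    (Metric.ball_mem_nhds l hδ) ?_ ?_ ?_ ?_ ?_ ?_).2
  · rw [integral_const_mul] at this
    exact this
  · exact Filter.Eventually.of_forall fun l => Continuous.aestronglyMeasurable (by fun_prop)
  · refine Integrable.mono' (hint k) (Continuous.aestronglyMeasurable (by fun_prop)) ?_
    exact Filter.Eventually.of_forall fun x =>
      integrand_bound R ε hε.le k (k+2) l l hl z hz (by simpa using hε.le) x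
  · exact Continuous.aestronglyMeasurable (by fun_prop)
  · refine Filter.Eventually.of_forall fun x m hm => ?_
    rw [norm_mul]
    gcongr
    refine integrand_bound R ε hε.le (k+1) (k+1+2) m l hl z hz ?_ x
    have hm' : |m - l| < ε / (2 * |R| + 1) := by simpa [Real.dist_eq] using hm
    rw [lt_div_iff₀ (by positivity)] at hm'
    nlinarith [abs_nonneg (m - l)]
  · exact (hint (k + 1)).const_mul _
  · refine Filter.Eventually.of_forall fun x m _ => ?_
    have h1 : HasDerivAt (fun u : ℝ => (u : ℂ)) 1 m := Complex.ofRealCLM.hasDerivAt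
    have h2 := (h1.mul_const z).mul_const (x : ℂ)
    have h3 := ((hasDerivAt_phiLK k ((m : ℂ) * z * (x : ℂ))).comp m h2).const_mul
      ((x : ℂ) ^ (k + 2))
    refine HasDerivAt.congr_deriv h3 ?_
    ring

/-- `κ` is twice continuously partially differentiable in `λ`, with the given
derivatives and values at `λ = 0` (Proposition `kappa`). -/
theorem kappa_twice_differentiable_in_lambda
    (μ c : ℝ) (hc : 0 ≤ c) (K : MeasureTheory.Measure ℝ)
    (hK0 : K {0} = 0)
    (hKmin : ∫⁻ x : ℝ, ENNReal.ofReal (min 1 (x ^ 2)) ∂K ≠ ⊤)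
    (R : ℝ) (hR : R ≠ 0) (a b : ℝ)
    (h0 : (0 : ℝ) ∈ Set.Ioo a b) (h2 : (2 : ℝ) ∈ Set.Ioo a b)
    (h2R : 2 * R ∈ Set.Ioo a b)
    (hK5 : ∫⁻ x in {x : ℝ | 1 ≤ |x|}, ENNReal.ofReal (|x| ^ 5) ∂K ≠ ⊤)
    (hKexp : ∀ s ∈ Set.Ioo a b,
      ∫⁻ x in {x : ℝ | 1 ≤ |x|}, ENNReal.ofReal (Real.exp (s * x)) ∂K ≠ ⊤)
    (σ2 : ℝ) (hσ2 : σ2 = c + ∫ x : ℝ, x ^ 2 ∂K) (hσ2pos : 0 < σ2)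
    :
    (∀ lam ∈ Set.Icc (0 : ℝ) 1, ∀ z : ℂ, z.re ∈ ({0, R, 2 * R} : Set ℝ) →
      HasDerivWithinAt (fun l => kappa μ c K l z) (kappaD1 K lam z) (Set.Icc 0 1) lam ∧
      HasDerivWithinAt (fun l => kappaD1 K l z) (kappaD2 K lam z) (Set.Icc 0 1) lam) ∧
    ContinuousOn (fun q : ℝ × ℂ => kappa μ c K q.1 q.2)
      (Set.Icc 0 1 ×ˢ {z : ℂ | z.re ∈ ({0, R, 2 * R} : Set ℝ)}) ∧
    ContinuousOn (fun q : ℝ × ℂ => kappaD1 K q.1 q.2)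
      (Set.Icc 0 1 ×ˢ {z : ℂ | z.re ∈ ({0, R, 2 * R} : Set ℝ)}) ∧
    ContinuousOn (fun q : ℝ × ℂ => kappaD2 K q.1 q.2)
      (Set.Icc 0 1 ×ˢ {z : ℂ | z.re ∈ ({0, R, 2 * R} : Set ℝ)}) ∧
    (∀ z : ℂ, z.re ∈ ({0, R, 2 * R} : Set ℝ) →
      kappa μ c K 0 z = (μ : ℂ) * z + ((σ2 : ℝ) : ℂ) / 2 * z ^ 2 ∧
      kappaD1 K 0 z = (((∫ x : ℝ, x ^ 3 ∂K) : ℝ) : ℂ) / 6 * z ^ 3 ∧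
      kappaD2 K 0 z = (((∫ x : ℝ, x ^ 4 ∂K) : ℝ) : ℂ) / 12 * z ^ 4) := by
  have ⟨ε, hε, e1, e2, e3, e4⟩ : ∃ ε : ℝ, 0 < ε ∧ 2 * ε ∈ Ioo a b ∧ -(2 * ε) ∈ Ioo a b ∧
      2 * R + 2 * ε ∈ Ioo a b ∧ 2 * R - 2 * ε ∈ Ioo a b := by
    obtain ⟨d, hd, hd'⟩ : ∃ d : ℝ, 0 < d ∧ d < min (min (-a) b) (min (2 * R - a) (b - 2 * R)) := by
      apply exists_between
      simp only [lt_min_iff]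
      refine ⟨⟨?_, ?_⟩, ?_, ?_⟩ <;> linarith [h0.1, h0.2, h2R.1, h2R.2]
    simp only [lt_min_iff] at hd'
    obtain ⟨⟨q1, q2⟩, q3, q4⟩ := hd'
    refine ⟨d / 2, by linarith, ⟨?_, ?_⟩, ⟨?_, ?_⟩, ⟨?_, ?_⟩, ⟨?_, ?_⟩⟩ <;>
      linarith [h0.1, h0.2, h2R.1, h2R.2]
  have hint := integrable_BLK K hKmin R a b ε hε hKexp e1 e2 e3 e4
  have hcont := fun k => continuousOn_PhiLK K R ε hε k hint
  simp_rw [kappaD2_eq, kappaD1_eq, kappa_eq]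
  refine ⟨?_, ?_, ?_, ?_, ?_⟩
  · intro l hl z hz
    constructor
    · have h := ((hasDerivAt_PhiLK K R ε hε 0 hint l hl z hz).const_mul (z ^ 2)).const_add
        ((μ : ℂ) * z + (c : ℂ) / 2 * z ^ 2)
      refine (h.congr_deriv ?_).hasDerivWithinAt
      ring
    · have h := (hasDerivAt_PhiLK K R ε hε 1 hint l hl z hz).const_mul (z ^ 3)
      refine (h.congr_deriv ?_).hasDerivWithinAt
      ring
  · exact ContinuousOn.add (Continuous.continuousOn (by fun_prop))
      (ContinuousOn.mul (Continuous.continuousOn (by fun_prop)) (hcont 0))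
  · exact ContinuousOn.mul (Continuous.continuousOn (by fun_prop)) (hcont 1)
  · exact ContinuousOn.mul (Continuous.continuousOn (by fun_prop)) (hcont 2)
  · intro z _
    obtain ⟨p0, p1, p2⟩ := phiLK_at_zero_val
    simp_rw [PhiLK_at_zero]
    rw [p0, p1, p2, hσ2]
    refine ⟨?_, ?_, ?_⟩
    · push_cast; ring
    · norm_num; ring
    · norm_num; ring
end

section
/- With the Lévy–Khintchine data (μ, c, K), κ, κ̄, γ and η as defined, the map (λ,z) ↦ e^{Re η(λ,z)} is bounded on [0,1] × {z ∈ ℂ : Re z = R}; equivalently, sup over λ ∈ [0,1] and z with Re z = R of Re η(λ,z) is finite. -/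
open MeasureTheory Complex Set

theorem aux_integrable (K : Measure ℝ)
    (hKmin : ∫⁻ x : ℝ, ENNReal.ofReal (min 1 (x ^ 2)) ∂K ≠ ⊤) (a b : ℝ)
    (hKexp : ∀ s ∈ Set.Ioo a b,
      ∫⁻ x in {x : ℝ | 1 ≤ |x|}, ENNReal.ofReal (Real.exp (s * x)) ∂K ≠ ⊤)
    (s : ℝ) (hs : s ∈ Set.Ioo a b) : Integrable (fun x : ℝ => x ^ 2 * Real.exp (s * x)) K := by
  have hmin : Integrable (fun x : ℝ => min 1 (x ^ 2)) K := by
    refine ⟨by fun_prop, ?_⟩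
    rw [hasFiniteIntegral_iff_ofReal (Filter.Eventually.of_forall fun x => by positivity)]
    exact lt_top_iff_ne_top.2 hKmin
  have hex : ∀ t ∈ Set.Ioo a b, IntegrableOn (fun x : ℝ => Real.exp (t * x)) {x : ℝ | 1 ≤ |x|} K := by
    intro t ht
    refine ⟨by fun_prop, ?_⟩
    rw [hasFiniteIntegral_iff_ofReal (Filter.Eventually.of_forall fun x => by positivity)]
    exact lt_top_iff_ne_top.2 (hKexp t ht)
  have hmeas : MeasurableSet {x : ℝ | 1 ≤ |x|} := measurableSet_le (by fun_prop) (by fun_prop)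
  obtain ⟨e, he, h1, h2⟩ : ∃ e : ℝ, 0 < e ∧ s + e ∈ Set.Ioo a b ∧ s - e ∈ Set.Ioo a b := by
    refine ⟨min (s - a) (b - s) / 2, ?_, ?_, ?_⟩
    · have := lt_min (sub_pos.2 hs.1) (sub_pos.2 hs.2); linarith
    all_goals
      have := lt_min (sub_pos.2 hs.1) (sub_pos.2 hs.2)
      have h3 := min_le_left (s - a) (b - s)
      have h4 := min_le_right (s - a) (b - s)
      constructor <;> linarith [hs.1, hs.2]
  have hA : IntegrableOn (fun x : ℝ => x ^ 2 * Real.exp (s * x)) {x : ℝ | 1 ≤ |x|} K := by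
    refine Integrable.mono' (((hex _ h1).add (hex _ h2)).const_mul (2 / e ^ 2)) (by fun_prop) ?_
    refine Filter.Eventually.of_forall fun x => ?_
    have key : (e * x) ^ 2 ≤ 2 * (Real.exp (e * x) + Real.exp (-(e * x))) := by
      have q : ∀ t : ℝ, 0 ≤ t → t ^ 2 ≤ 2 * (Real.exp t + Real.exp (-t)) := fun t ht => by
        have := Real.quadratic_le_exp_of_nonneg ht
        have := Real.exp_pos (-t)
        nlinarith
      rcases le_total 0 (e * x) with h | h
      · exact q _ h
      · have := q (-(e * x)) (by linarith)
        rw [neg_neg] at this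
        nlinarith
    rw [Real.norm_of_nonneg (by positivity)]
    have e1 : Real.exp ((s + e) * x) = Real.exp (e * x) * Real.exp (s * x) := by
      rw [← Real.exp_add]; ring_nf
    have e2 : Real.exp ((s - e) * x) = Real.exp (-(e * x)) * Real.exp (s * x) := by
      rw [← Real.exp_add]; ring_nf
    simp only [Pi.add_apply]
    rw [e1, e2, ← add_mul, ← mul_assoc]
    refine mul_le_mul_of_nonneg_right ?_ (Real.exp_pos _).le
    rw [div_mul_eq_mul_div, le_div_iff₀ (by positivity)]
    linarith
  have hB : IntegrableOn (fun x : ℝ => x ^ 2 * Real.exp (s * x)) {x : ℝ | 1 ≤ |x|}ᶜ K := by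
    refine Integrable.mono' ((hmin.integrableOn (s := {x : ℝ | 1 ≤ |x|}ᶜ)).mul_const (Real.exp |s|))
      (by fun_prop) ?_
    refine (ae_restrict_iff' hmeas.compl).2 (Filter.Eventually.of_forall fun x hx => ?_)
    simp only [Set.mem_compl_iff, Set.mem_ofPred_eq, not_le] at hx
    rw [Real.norm_of_nonneg (by positivity)]
    have h3 : x ^ 2 ≤ 1 := by rw [← sq_abs]; nlinarith [abs_nonneg x]
    rw [min_eq_right h3]
    refine mul_le_mul_of_nonneg_left (Real.exp_le_exp.2 ?_) (sq_nonneg x)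
    calc s * x ≤ |s * x| := le_abs_self _
      _ = |s| * |x| := abs_mul _ _
      _ ≤ |s| * 1 := by gcongr
      _ = |s| := mul_one _
  rw [← integrableOn_univ, ← Set.union_compl_self {x : ℝ | 1 ≤ |x|}]
  exact hA.union hB

theorem aux_norm (w : ℂ) :
    ‖Complex.exp w - 1 - w‖ ≤ 2 * ‖w‖ ^ 2 * (1 + Real.exp w.re) := by
  have hE := Real.exp_pos w.re
  rcases le_total ‖w‖ 1 with h | h
  · have := Complex.norm_exp_sub_one_sub_id_le h
    nlinarith [sq_nonneg ‖w‖, mul_nonneg (sq_nonneg ‖w‖) hE.le]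
  · have h1 : ‖Complex.exp w - 1 - w‖ ≤ Real.exp w.re + 1 + ‖w‖ := by
      calc _ ≤ ‖Complex.exp w - 1‖ + ‖w‖ := norm_sub_le _ _
        _ ≤ ‖Complex.exp w‖ + ‖(1 : ℂ)‖ + ‖w‖ := by gcongr; exact norm_sub_le _ _
        _ = _ := by rw [Complex.norm_exp, norm_one]
    have h2 : 1 ≤ ‖w‖ ^ 2 := by nlinarith
    have h3 : ‖w‖ ≤ ‖w‖ ^ 2 := by nlinarith
    nlinarith [mul_nonneg (sub_nonneg.2 h2) hE.le]

theorem aux_exp (l t : ℝ) (h0 : 0 ≤ l) (h1 : l ≤ 1) : Real.exp (l * t) ≤ 1 + Real.exp t := by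
  rcases le_total 0 t with h | h
  · have : Real.exp (l * t) ≤ Real.exp t := Real.exp_le_exp.2 (by nlinarith)
    linarith
  · have : Real.exp (l * t) ≤ Real.exp 0 := Real.exp_le_exp.2 (by nlinarith)
    rw [Real.exp_zero] at this
    linarith [Real.exp_pos t]

theorem aux_norm2 (l : ℝ) (h0 : 0 ≤ l) (h1 : l ≤ 1) (z : ℂ) (x : ℝ) :
    ‖Complex.exp ((l : ℂ) * z * (x : ℂ)) - 1 - (l : ℂ) * z * (x : ℂ)‖ ≤
      l ^ 2 * (2 * ‖z‖ ^ 2 * (2 * (x ^ 2 * Real.exp (0 * x)) + x ^ 2 * Real.exp (z.re * x))) := by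
  refine (aux_norm _).trans ?_
  have e1 : ((l : ℂ) * z * (x : ℂ)).re = l * (z.re * x) := by simp; ring
  have e2 : ‖(l : ℂ) * z * (x : ℂ)‖ ^ 2 = l ^ 2 * ‖z‖ ^ 2 * x ^ 2 := by
    simp [mul_pow]
  rw [e1, e2, zero_mul, Real.exp_zero]
  have := aux_exp l (z.re * x) h0 h1
  have h3 : 0 ≤ 2 * (l ^ 2 * ‖z‖ ^ 2 * x ^ 2) := by positivity
  nlinarith [mul_le_mul_of_nonneg_left this h3]

theorem aux_int_s8 (K : Measure ℝ) (z : ℂ)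
    (hi0 : Integrable (fun x : ℝ => x ^ 2 * Real.exp (0 * x)) K)
    (hi : Integrable (fun x : ℝ => x ^ 2 * Real.exp (z.re * x)) K)
    (l : ℝ) (h0 : 0 ≤ l) (h1 : l ≤ 1) :
    Integrable (fun x : ℝ => Complex.exp ((l : ℂ) * z * (x : ℂ)) - 1 - (l : ℂ) * z * (x : ℂ)) K :=
  Integrable.mono' ((((hi0.const_mul 2).add hi).const_mul (2 * ‖z‖ ^ 2)).const_mul (l ^ 2))
    (Continuous.aestronglyMeasurable (by fun_prop))
    (Filter.Eventually.of_forall fun x => aux_norm2 l h0 h1 z x)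

/-- uniform bound for kappa in lam -/
theorem aux_kappa_bdd (μ c : ℝ) (K : Measure ℝ) (z : ℂ)
    (hi0 : Integrable (fun x : ℝ => x ^ 2 * Real.exp (0 * x)) K)
    (hi : Integrable (fun x : ℝ => x ^ 2 * Real.exp (z.re * x)) K) :
    ∃ B : ℝ, ∀ l ∈ Set.Icc (0 : ℝ) 1, |(kappa μ c K l z).re| ≤ B := by
  refine ⟨max ‖kappa μ c K 0 z‖ (‖(μ : ℂ) * z + (c : ℂ) / 2 * z ^ 2‖ +
    ∫ x, (2 * ‖z‖ ^ 2 * (2 * (x ^ 2 * Real.exp (0 * x)) + x ^ 2 * Real.exp (z.re * x))) ∂K), ?_⟩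
  rintro l ⟨h0, h1⟩
  refine (Complex.abs_re_le_norm _).trans ?_
  by_cases hl : l = 0
  · subst hl; exact le_max_left _ _
  refine le_trans ?_ (le_max_right _ _)
  rw [kappa, if_neg hl]
  refine (norm_add_le _ _).trans ?_
  gcongr
  rw [norm_mul, norm_inv, norm_pow, Complex.norm_real, Real.norm_eq_abs, sq_abs,
    inv_mul_le_iff₀ (by positivity), ← integral_const_mul]
  exact norm_integral_le_of_norm_le
    ((((hi0.const_mul 2).add hi).const_mul (2 * ‖z‖ ^ 2)).const_mul (l ^ 2))
    (Filter.Eventually.of_forall fun x => aux_norm2 l h0 h1 z x)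

theorem aux_kappa_im (μ c : ℝ) (K : Measure ℝ) (l s : ℝ) :
    kappa μ c K l (s : ℂ) = (((kappa μ c K l (s : ℂ)).re : ℝ) : ℂ) := by
  suffices h : ∃ r : ℝ, kappa μ c K l (s : ℂ) = (r : ℂ) by
    obtain ⟨r, hr⟩ := h
    rw [hr, Complex.ofReal_re]
  by_cases hl : l = 0
  · exact ⟨μ * s + (c + ∫ x : ℝ, x ^ 2 ∂K) / 2 * s ^ 2, by rw [kappa, if_pos hl]; push_cast; rfl⟩
  · refine ⟨μ * s + c / 2 * s ^ 2 + (l ^ 2)⁻¹ * ∫ x : ℝ, (Real.exp (l * s * x) - 1 - l * s * x) ∂K, ?_⟩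
    rw [kappa, if_neg hl]
    push_cast
    congr 2
    rw [← integral_complex_ofReal]
    congr 1
    ext x
    simp

/-- real part for lam nonzero -/
theorem aux_kappa_re (μ c : ℝ) (K : Measure ℝ) (l s y : ℝ) (hl : l ≠ 0) (h0 : 0 ≤ l) (h1 : l ≤ 1)
    (hi0 : Integrable (fun x : ℝ => x ^ 2 * Real.exp (0 * x)) K)
    (hi : Integrable (fun x : ℝ => x ^ 2 * Real.exp (s * x)) K) :
    Integrable (fun x : ℝ => Real.exp (l * s * x) * Real.cos (l * y * x) - 1 - l * s * x) K ∧
    (kappa μ c K l ⟨s, y⟩).re = μ * s + c / 2 * (s ^ 2 - y ^ 2) +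
      (l ^ 2)⁻¹ * ∫ x : ℝ, (Real.exp (l * s * x) * Real.cos (l * y * x) - 1 - l * s * x) ∂K := by
  have H := aux_int_s8 K ⟨s, y⟩ hi0 hi l h0 h1
  have e : ∀ x : ℝ, (Complex.exp ((l : ℂ) * ⟨s, y⟩ * (x : ℂ)) - 1 - (l : ℂ) * ⟨s, y⟩ * (x : ℂ)).re
      = Real.exp (l * s * x) * Real.cos (l * y * x) - 1 - l * s * x := by
    intro x
    simp [Complex.exp_re]
  constructor
  · have := H.re
    refine this.congr (Filter.Eventually.of_forall fun x => ?_)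
    exact e x
  · have h3 := integral_re H
    have h4 : ∫ x : ℝ, (Real.exp (l * s * x) * Real.cos (l * y * x) - 1 - l * s * x) ∂K =
        (∫ x : ℝ, (Complex.exp ((l : ℂ) * ⟨s, y⟩ * (x : ℂ)) - 1 - (l : ℂ) * ⟨s, y⟩ * (x : ℂ)) ∂K).re := by
      refine Eq.trans ?_ h3
      congr 1
      ext x
      exact (e x).symm
    rw [h4, kappa, if_neg hl]
    have h5 : ((l : ℂ) ^ 2)⁻¹ = (((l ^ 2)⁻¹ : ℝ) : ℂ) := by push_cast; rfl
    have h6 : (c : ℂ) / 2 = ((c / 2 : ℝ) : ℂ) := by push_cast; rfl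
    rw [h5, h6, Complex.add_re, Complex.add_re, Complex.re_ofReal_mul, Complex.re_ofReal_mul,
      Complex.re_ofReal_mul]
    congr 3
    simp [pow_two]

theorem aux_pt (G A u : ℝ) (hG : |G| ≤ A) :
    G * (Real.exp u - 1) - 1 ≤ (A ^ 2 + 1) * u ^ 2 * (1 + Real.exp u) := by
  have hA : 0 ≤ A := (abs_nonneg G).trans hG
  have hE := Real.exp_pos u
  have h1 : |Real.exp u - 1| ≤ |u| * (1 + Real.exp u) := by
    have ha := Real.add_one_le_exp u
    have hb := Real.add_one_le_exp (-u)
    have hm : Real.exp u * Real.exp (-u) = 1 := by rw [← Real.exp_add]; simp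
    have hc : Real.exp u - 1 ≤ u * Real.exp u := by nlinarith
    rcases le_total 0 u with h | h
    · rw [abs_of_nonneg h, abs_le]; constructor <;> nlinarith
    · rw [abs_of_nonpos h, abs_le]; constructor <;> nlinarith
  have h2 : G * (Real.exp u - 1) ≤ A * (|u| * (1 + Real.exp u)) := by
    calc _ ≤ |G * (Real.exp u - 1)| := le_abs_self _
      _ = |G| * |Real.exp u - 1| := abs_mul _ _
      _ ≤ _ := by gcongr
  have h3 : A * |u| ≤ 1 / 4 + A ^ 2 * u ^ 2 := by
    have := sq_nonneg (A * |u| - 1 / 2)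
    have h4 := sq_abs u
    nlinarith
  have h5 : A * (|u| * (1 + Real.exp u)) ≤ (1 / 4 + A ^ 2 * u ^ 2) * (1 + Real.exp u) := by
    rw [← mul_assoc]; gcongr
  have h6 : Real.exp u / 4 ≤ 3 / 4 + u ^ 2 * (1 + Real.exp u) := by
    rcases le_total u 1 with h | h
    · have : Real.exp u ≤ Real.exp 1 := Real.exp_le_exp.2 h
      have := Real.exp_one_lt_d9
      have : 0 ≤ u ^ 2 * (1 + Real.exp u) := by positivity
      linarith
    · have : 1 * Real.exp u ≤ u ^ 2 * Real.exp u := by gcongr; nlinarith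
      nlinarith [sq_nonneg u]
  nlinarith

theorem aux_lower (l x : ℝ) (h0 : 0 ≤ l) (h1 : l ≤ 1) :
    l ^ 2 * (x ^ 2 / (1 + |x|) ^ 2) ≤ (Real.exp (l * x) - 1) ^ 2 := by
  have hx := abs_nonneg x
  have hlx : |l * x| ≤ |x| := by rw [abs_mul, abs_of_nonneg h0]; nlinarith
  rw [← mul_div_assoc, ← mul_pow, ← div_pow, ← sq_abs, ← sq_abs (Real.exp (l * x) - 1)]
  refine pow_le_pow_left₀ (abs_nonneg _) ?_ 2
  rw [abs_div, abs_of_pos (show 0 < 1 + |x| by linarith), div_le_iff₀ (by linarith)]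
  set u := l * x
  have ha := Real.add_one_le_exp u
  rcases le_total 0 u with h | h
  · rw [abs_of_nonneg h, abs_of_nonneg (by linarith : 0 ≤ Real.exp u - 1)]
    nlinarith
  · have hb := Real.add_one_le_exp (-u)
    have hE := Real.exp_pos u
    have hm : Real.exp u * Real.exp (-u) = 1 := by rw [← Real.exp_add]; simp
    have hle : Real.exp u ≤ 1 := by rw [← Real.exp_zero]; exact Real.exp_le_exp.2 h
    rw [abs_of_nonpos h] at hlx ⊢
    rw [abs_of_nonpos (by linarith : Real.exp u - 1 ≤ 0)]
    have hc : Real.exp u * (1 - u) ≤ 1 := by nlinarith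
    nlinarith

/-- uniform boundedness of `e^{Re η(λ,z)}` on `[0,1] × {Re z = R}`
(Lemma `expReKappaReEta`, part 2). -/
theorem exp_re_eta_bounded
    (μ c : ℝ) (hc : 0 ≤ c) (K : MeasureTheory.Measure ℝ)
    (hK0 : K {0} = 0)
    (hKmin : ∫⁻ x : ℝ, ENNReal.ofReal (min 1 (x ^ 2)) ∂K ≠ ⊤)
    (R : ℝ) (hR : R ≠ 0) (a b : ℝ)
    (h0 : (0 : ℝ) ∈ Set.Ioo a b) (h2 : (2 : ℝ) ∈ Set.Ioo a b)
    (h2R : 2 * R ∈ Set.Ioo a b)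
    (hK5 : ∫⁻ x in {x : ℝ | 1 ≤ |x|}, ENNReal.ofReal (|x| ^ 5) ∂K ≠ ⊤)
    (hKexp : ∀ s ∈ Set.Ioo a b,
      ∫⁻ x in {x : ℝ | 1 ≤ |x|}, ENNReal.ofReal (Real.exp (s * x)) ∂K ≠ ⊤)
    (σ2 : ℝ) (hσ2 : σ2 = c + ∫ x : ℝ, x ^ 2 ∂K) (hσ2pos : 0 < σ2)
    :
    ∃ M : ℝ, ∀ lam ∈ Set.Icc (0 : ℝ) 1, ∀ z : ℂ, z.re = R →
      Real.exp ((etaLK μ c K lam z).re) ≤ M := by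
  have hK : ∀ s ∈ Set.Ioo a b, Integrable (fun x : ℝ => x ^ 2 * Real.exp (s * x)) K :=
    aux_integrable K hKmin a b hKexp
  have hi0 := hK 0 h0
  have hi2 := hK 2 h2
  have hi1 := hK 1 ⟨by linarith [h0.1], by linarith [h2.2]⟩
  have hiR := hK R ⟨by linarith [h0.1, h2R.1], by linarith [h0.2, h2R.2]⟩
  have hiR1 := hK (R + 1) ⟨by linarith [h2.1, h2R.1], by linarith [h2.2, h2R.2]⟩
  have hisq : Integrable (fun x : ℝ => x ^ 2) K := by simpa using hi0
  set k : ℝ → ℝ → ℝ := fun l s => (kappa μ c K l (s : ℂ)).re with hk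
  obtain ⟨B1, hB1⟩ := aux_kappa_bdd μ c K ((1 : ℝ) : ℂ) hi0 hi1
  obtain ⟨BR, hBR⟩ := aux_kappa_bdd μ c K ((R : ℝ) : ℂ) hi0 hiR
  obtain ⟨BS, hBS⟩ := aux_kappa_bdd μ c K ((R + 1 : ℝ) : ℂ) hi0 hiR1
  have hiw : Integrable (fun x : ℝ => x ^ 2 / (1 + |x|) ^ 2) K := by
    refine hisq.mono' (Continuous.aestronglyMeasurable ?_) (Filter.Eventually.of_forall fun x => ?_)
    · refine Continuous.div (by fun_prop) (by fun_prop) fun x => ?_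
      have := abs_nonneg x
      positivity
    · rw [Real.norm_of_nonneg (by positivity)]
      refine div_le_self (sq_nonneg x) ?_
      nlinarith [abs_nonneg x]
  -- uniform lower bound of the denominator
  obtain ⟨d, hd, hdl⟩ : ∃ d : ℝ, 0 < d ∧ ∀ l ∈ Set.Icc (0 : ℝ) 1, d ≤ k l 2 - k l 1 - k l 1 := by
    have hw0 : 0 ≤ ∫ x : ℝ, x ^ 2 / (1 + |x|) ^ 2 ∂K := integral_nonneg fun x => by positivity
    refine ⟨min σ2 (c + ∫ x : ℝ, x ^ 2 / (1 + |x|) ^ 2 ∂K), lt_min hσ2pos ?_, ?_⟩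
    · by_contra hcon
      have hc0 : c = 0 := by linarith
      have hz : ∫ x : ℝ, x ^ 2 / (1 + |x|) ^ 2 ∂K = 0 := by linarith
      rw [integral_eq_zero_iff_of_nonneg (fun x => by positivity) hiw] at hz
      have : ∫ x : ℝ, x ^ 2 ∂K = 0 := by
        refine integral_eq_zero_of_ae (hz.mono fun x hx => ?_)
        have h3 : (1 + |x|) ^ 2 ≠ 0 := by have := abs_nonneg x; positivity
        simp only [Pi.zero_apply, div_eq_zero_iff, h3, or_false] at hx
        exact hx
      rw [hσ2, hc0, this] at hσ2pos
      simp at hσ2pos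
    · rintro l ⟨hl0, hl1⟩
      by_cases hl : l = 0
      · refine (min_le_left _ _).trans (le_of_eq ?_)
        simp only [hk, kappa, if_pos hl]
        rw [← hσ2]
        norm_cast
        ring
      · refine (min_le_right _ _).trans ?_
        obtain ⟨i1, e1⟩ := aux_kappa_re μ c K l 1 0 hl hl0 hl1 hi0 hi1
        obtain ⟨i2, e2⟩ := aux_kappa_re μ c K l 2 0 hl hl0 hl1 hi0 hi2
        have f1 : k l 1 = (kappa μ c K l ⟨1, 0⟩).re := rfl
        have f2 : k l 2 = (kappa μ c K l ⟨2, 0⟩).re := rfl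
        have hle : l ^ 2 * ∫ x : ℝ, x ^ 2 / (1 + |x|) ^ 2 ∂K ≤
            (∫ x : ℝ, (Real.exp (l * 2 * x) * Real.cos (l * 0 * x) - 1 - l * 2 * x) ∂K) -
            2 * ∫ x : ℝ, (Real.exp (l * 1 * x) * Real.cos (l * 0 * x) - 1 - l * 1 * x) ∂K := by
          rw [← integral_const_mul, ← integral_const_mul, ← integral_sub i2 (i1.const_mul 2)]
          refine integral_mono (hiw.const_mul _) (i2.sub (i1.const_mul 2)) fun x => ?_
          refine (aux_lower l x hl0 hl1).trans (le_of_eq ?_)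
          have : Real.exp (l * 2 * x) = Real.exp (l * x) ^ 2 := by
            rw [← Real.exp_nat_mul]; congr 1; push_cast; ring
          simp only [this, mul_zero, zero_mul, Real.cos_zero, mul_one]
          ring
        have hl2 : 0 < l ^ 2 := by positivity
        rw [← le_inv_mul_iff₀ hl2] at hle
        rw [f1, f2, e1, e2]
        nlinarith
  set A := B1 / d with hAdef
  set W := ∫ x : ℝ, (2 * (x ^ 2 * Real.exp (0 * x)) + x ^ 2 * Real.exp (R * x)
      + x ^ 2 * Real.exp ((R + 1) * x)) ∂K with hW
  have hiW : Integrable (fun x : ℝ => 2 * (x ^ 2 * Real.exp (0 * x)) + x ^ 2 * Real.exp (R * x)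
      + x ^ 2 * Real.exp ((R + 1) * x)) K := ((hi0.const_mul 2).add hiR).add hiR1
  have hW0 : 0 ≤ W := integral_nonneg fun x => by positivity
  refine ⟨Real.exp (BR + A * (BS + BR + B1) + 2 * (A ^ 2 + 1) * W), ?_⟩
  rintro l ⟨hl0, hl1⟩ z hz
  refine Real.exp_le_exp.2 ?_
  obtain ⟨zr, y⟩ := z
  simp only at hz
  subst hz
  have b1 : |k l 1| ≤ B1 := hB1 l ⟨hl0, hl1⟩
  have bR : |k l zr| ≤ BR := hBR l ⟨hl0, hl1⟩
  have bS : |k l (zr + 1)| ≤ BS := hBS l ⟨hl0, hl1⟩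
  have hden := hdl l ⟨hl0, hl1⟩
  set G := k l 1 / (k l 2 - k l 1 - k l 1) with hGdef
  have hG : |G| ≤ A := by
    rw [hGdef, abs_div, abs_of_pos (hd.trans_le hden), hAdef]
    have : 0 ≤ B1 := (abs_nonneg _).trans b1
    gcongr
  have hA0 : 0 ≤ A := (abs_nonneg G).trans hG
  have hre : (etaLK μ c K l ⟨zr, y⟩).re = (kappa μ c K l ⟨zr, y⟩).re -
      G * ((kappa μ c K l ⟨zr + 1, y⟩).re - (kappa μ c K l ⟨zr, y⟩).re - k l 1) := by
    have g1 : kappa μ c K l 1 = ((k l 1 : ℝ) : ℂ) := by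
      have := aux_kappa_im μ c K l 1
      simp only [hk]
      rwa [Complex.ofReal_one] at this ⊢
    have g2 : kappa μ c K l (1 + 1) = ((k l 2 : ℝ) : ℂ) := by
      have := aux_kappa_im μ c K l 2
      have h3 : (1 + 1 : ℂ) = ((2 : ℝ) : ℂ) := by push_cast; norm_num
      rw [h3]; exact this
    have g3 : (⟨zr, y⟩ + 1 : ℂ) = ⟨zr + 1, y⟩ := by apply Complex.ext <;> simp
    have g4 : kappa μ c K l 1 * gamLK μ c K l ⟨zr, y⟩ = (G : ℂ) *
        (kappa μ c K l ⟨zr + 1, y⟩ - kappa μ c K l ⟨zr, y⟩ - (k l 1 : ℂ)) := by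
      rw [gamLK, kbar, kbar, g2, g3, g1, hGdef]
      push_cast
      ring
    rw [etaLK, g4, Complex.sub_re, Complex.re_ofReal_mul, Complex.sub_re, Complex.sub_re,
      Complex.ofReal_re]
  -- the comparison with y = 0
  have hcmp : (kappa μ c K l ⟨zr, y⟩).re -
      G * ((kappa μ c K l ⟨zr + 1, y⟩).re - (kappa μ c K l ⟨zr, y⟩).re) ≤
      k l zr - G * (k l (zr + 1) - k l zr) + 2 * (A ^ 2 + 1) * W := by
    by_cases hl : l = 0
    · have e : ∀ s t : ℝ, (kappa μ c K l ⟨s, t⟩).re = μ * s + σ2 / 2 * (s ^ 2 - t ^ 2) := by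
        intro s t
        rw [kappa, if_pos hl, ← hσ2]
        have h6 : (σ2 : ℂ) / 2 = ((σ2 / 2 : ℝ) : ℂ) := by push_cast; rfl
        rw [h6, Complex.add_re, Complex.re_ofReal_mul, Complex.re_ofReal_mul]
        simp [pow_two]
      have f : ∀ s : ℝ, k l s = (kappa μ c K l ⟨s, 0⟩).re := fun s => rfl
      rw [f, f, e, e, e, e]
      have : 0 ≤ 2 * (A ^ 2 + 1) * W := by positivity
      have : 0 ≤ σ2 * y ^ 2 := by positivity
      nlinarith
    · obtain ⟨i1, e1⟩ := aux_kappa_re μ c K l zr y hl hl0 hl1 hi0 hiR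
      obtain ⟨i2, e2⟩ := aux_kappa_re μ c K l (zr + 1) y hl hl0 hl1 hi0 hiR1
      obtain ⟨i3, e3⟩ := aux_kappa_re μ c K l zr 0 hl hl0 hl1 hi0 hiR
      obtain ⟨i4, e4⟩ := aux_kappa_re μ c K l (zr + 1) 0 hl hl0 hl1 hi0 hiR1
      have f : ∀ s : ℝ, k l s = (kappa μ c K l ⟨s, 0⟩).re := fun s => rfl
      rw [f, f, e1, e2, e3, e4]
      have hl2 : 0 < l ^ 2 := by positivity
      have key : ((1 + G) * ∫ x : ℝ, (Real.exp (l * zr * x) * Real.cos (l * y * x) - 1 - l * zr * x) ∂K)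
          - (G * ∫ x : ℝ, (Real.exp (l * (zr + 1) * x) * Real.cos (l * y * x) - 1 - l * (zr + 1) * x) ∂K)
          ≤ ((1 + G) * ∫ x : ℝ, (Real.exp (l * zr * x) * Real.cos (l * 0 * x) - 1 - l * zr * x) ∂K)
          - (G * ∫ x : ℝ, (Real.exp (l * (zr + 1) * x) * Real.cos (l * 0 * x) - 1 - l * (zr + 1) * x) ∂K)
          + l ^ 2 * (2 * (A ^ 2 + 1)) * W := by
        rw [hW, ← integral_const_mul, ← integral_const_mul, ← integral_const_mul,
          ← integral_const_mul, ← integral_const_mul,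
          ← integral_sub (i1.const_mul _) (i2.const_mul _),
          ← integral_sub (i3.const_mul _) (i4.const_mul _)]
        refine le_of_le_of_eq ?_
          (integral_add ((i3.const_mul _).sub (i4.const_mul _)) (hiW.const_mul _))
        refine integral_mono ((i1.const_mul _).sub (i2.const_mul _))
          (((i3.const_mul _).sub (i4.const_mul _)).add (hiW.const_mul _)) fun x => ?_
        have hexp : Real.exp (l * (zr + 1) * x) = Real.exp (l * zr * x) * Real.exp (l * x) := by
          rw [← Real.exp_add]; congr 1; ring
        have p1 := aux_pt G A (l * x) hG
        have p2 : 0 ≤ 1 - Real.cos (l * y * x) := by linarith [Real.cos_le_one (l * y * x)]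
        have p3 : 1 - Real.cos (l * y * x) ≤ 2 := by linarith [Real.neg_one_le_cos (l * y * x)]
        have q1 : Real.exp (l * zr * x) ≤ 1 + Real.exp (zr * x) := by
          have := aux_exp l (zr * x) hl0 hl1
          rwa [← mul_assoc] at this
        have q2 : Real.exp (l * zr * x) * Real.exp (l * x) ≤ 1 + Real.exp ((zr + 1) * x) := by
          have := aux_exp l ((zr + 1) * x) hl0 hl1
          rwa [← mul_assoc, hexp] at this
        have hE := Real.exp_pos (l * zr * x)
        have r1 : (1 - Real.cos (l * y * x)) * (Real.exp (l * zr * x) *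
            (G * (Real.exp (l * x) - 1) - 1)) ≤
            2 * (Real.exp (l * zr * x) * ((A ^ 2 + 1) * (l * x) ^ 2 * (1 + Real.exp (l * x)))) := by
          calc _ ≤ (1 - Real.cos (l * y * x)) * (Real.exp (l * zr * x) *
                ((A ^ 2 + 1) * (l * x) ^ 2 * (1 + Real.exp (l * x)))) := by gcongr
            _ ≤ _ := by gcongr
        have r2 : 2 * (A ^ 2 + 1) * (l * x) ^ 2 * (Real.exp (l * zr * x) +
            Real.exp (l * zr * x) * Real.exp (l * x)) ≤ 2 * (A ^ 2 + 1) * (l * x) ^ 2 *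
            ((1 + Real.exp (zr * x)) + (1 + Real.exp ((zr + 1) * x))) := by gcongr
        simp only [Pi.add_apply, Pi.sub_apply, hexp, mul_zero, zero_mul, Real.cos_zero, mul_one,
          Real.exp_zero]
        linear_combination r1 + r2
      have key2 := mul_le_mul_of_nonneg_left key (inv_nonneg.2 hl2.le)
      have hcan : (l ^ 2)⁻¹ * (l ^ 2 * (2 * (A ^ 2 + 1)) * W) = 2 * (A ^ 2 + 1) * W := by
        field_simp
      have hcy : 0 ≤ c * y ^ 2 := by positivity
      linear_combination key2 + hcan + hcy / 2
  have hGb : |G * (k l (zr + 1) - k l zr - k l 1)| ≤ A * (BS + BR + B1) := by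
    rw [abs_mul]
    have : |k l (zr + 1) - k l zr - k l 1| ≤ BS + BR + B1 := by
      rw [abs_le] at *
      constructor <;> linarith [bS.1, bS.2, bR.1, bR.2, b1.1, b1.2]
    gcongr
  rw [hre]
  have := neg_abs_le (G * (k l (zr + 1) - k l zr - k l 1))
  have := le_abs_self (k l zr)
  nlinarith
end

section
/- With the Lévy–Khintchine data (μ, c, K) and κ as defined, suppose (ν_λ)_{λ∈(0,1]} is a family of Borel probability measures on ℝ such that for each λ ∈ (0,1] the characteristic function of ν_λ is u ↦ exp(κ(λ, iu)). Then, as λ → 0, ν_λ converges weakly to the Gaussian measure on ℝ with mean μ and variance σ². -/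
open MeasureTheory ProbabilityTheory Complex Set Filter
open scoped Topology

lemma aux_bound (y : ℝ) : ‖Complex.exp ((y : ℂ) * I) - 1 - (y : ℂ) * I‖ ≤ 3 * y ^ 2 := by
  have hn : ‖(y : ℂ) * I‖ = |y| := by simp
  by_cases h : |y| ≤ 1
  · have := Complex.norm_exp_sub_one_sub_id_le (x := (y : ℂ) * I) (by rw [hn]; exact h)
    rw [hn, sq_abs] at this
    nlinarith [sq_nonneg y]
  · push Not at h
    have h1 := norm_sub_le (Complex.exp ((y : ℂ) * I) - 1) ((y : ℂ) * I)
    have h2 := norm_sub_le (Complex.exp ((y : ℂ) * I)) 1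
    rw [Complex.norm_exp_ofReal_mul_I, norm_one] at h2
    rw [hn] at h1
    rw [← sq_abs y]
    nlinarith

lemma aux_lim (w : ℂ) : Tendsto (fun l : ℝ => ((l : ℂ) ^ 2)⁻¹ * (Complex.exp (l * w) - 1 - l * w))
    (𝓝[Set.Ioc (0 : ℝ) 1] 0) (𝓝 (w ^ 2 / 2)) := by
  rw [tendsto_iff_norm_sub_tendsto_zero]
  have hcont : Tendsto (fun l : ℝ => l * ‖w‖ ^ 3) (𝓝[Set.Ioc (0 : ℝ) 1] 0) (𝓝 0) := by
    have : ContinuousAt (fun l : ℝ => l * ‖w‖ ^ 3) 0 := by fun_prop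
    simpa using this.tendsto.mono_left nhdsWithin_le_nhds
  have hsmall : ∀ᶠ l : ℝ in 𝓝[Set.Ioc (0 : ℝ) 1] 0, l * ‖w‖ < 1 := by
    have : ContinuousAt (fun l : ℝ => l * ‖w‖) 0 := by fun_prop
    have := this.tendsto.mono_left (nhdsWithin_le_nhds (s := Set.Ioc (0 : ℝ) 1))
    exact this.eventually (gt_mem_nhds (by simp))
  refine squeeze_zero' (Eventually.of_forall fun _ => norm_nonneg _) ?_ hcont
  filter_upwards [hsmall, self_mem_nhdsWithin] with l hl hl0
  have hlp : 0 < l := hl0.1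
  have hn : ‖(l : ℂ) * w‖ = l * ‖w‖ := by simp [abs_of_pos hlp]
  have hb := Complex.exp_bound (x := (l : ℂ) * w) (by rw [hn]; exact hl.le) (n := 3) (by norm_num)
  have hlc : (l : ℂ) ≠ 0 := by exact_mod_cast hlp.ne'
  have he : ((l : ℂ) ^ 2)⁻¹ * (Complex.exp (l * w) - 1 - l * w) - w ^ 2 / 2
      = ((l : ℂ) ^ 2)⁻¹ * (Complex.exp (l * w) - ∑ m ∈ Finset.range 3, (l * w) ^ m / (m.factorial : ℂ)) := by
    simp only [Finset.sum_range_succ, Finset.sum_range_zero, Nat.factorial]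
    field_simp
    push_cast
    ring
  rw [he, norm_mul, norm_inv, norm_pow, Complex.norm_real, Real.norm_eq_abs, abs_of_pos hlp]
  rw [hn] at hb
  have hb2 : ‖Complex.exp (l * w) - ∑ m ∈ Finset.range 3, (l * w) ^ m / (m.factorial : ℂ)‖
      ≤ (l * ‖w‖) ^ 3 := by
    refine hb.trans ?_
    have : 0 ≤ (l * ‖w‖) ^ 3 := by positivity
    norm_num [Nat.factorial]
    nlinarith
  calc _ ≤ (l ^ 2)⁻¹ * (l * ‖w‖) ^ 3 := by gcongr
    _ = _ := by field_simp

lemma aux_int_s10 (K : Measure ℝ)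
    (hKmin : ∫⁻ x : ℝ, ENNReal.ofReal (min 1 (x ^ 2)) ∂K ≠ ⊤)
    (hK5 : ∫⁻ x in {x : ℝ | 1 ≤ |x|}, ENNReal.ofReal (|x| ^ 5) ∂K ≠ ⊤) :
    Integrable (fun x : ℝ => x ^ 2) K := by
  have hm : MeasurableSet {x : ℝ | 1 ≤ |x|} := measurableSet_le (by fun_prop) (by fun_prop)
  have h1 : Integrable (fun x : ℝ => min 1 (x ^ 2)) K :=
    (lintegral_ofReal_ne_top_iff_integrable (by fun_prop)
      (Eventually.of_forall fun x => by positivity)).1 hKmin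
  have h2 : IntegrableOn (fun x : ℝ => |x| ^ 5) {x : ℝ | 1 ≤ |x|} K :=
    (lintegral_ofReal_ne_top_iff_integrable (by fun_prop)
      (Eventually.of_forall fun x => by positivity)).1 hK5
  refine (h1.add (h2.integrable_indicator hm)).mono' (by fun_prop) (Eventually.of_forall fun x => ?_)
  simp only [Pi.add_apply]
  rw [Real.norm_of_nonneg (sq_nonneg x)]
  by_cases h : 1 ≤ |x|
  · rw [Set.indicator_of_mem (by exact h), ← sq_abs]
    have : |x| ^ 2 ≤ |x| ^ 5 := pow_le_pow_right₀ h (by norm_num)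
    have : 0 ≤ min 1 (|x| ^ 2) := by positivity
    linarith
  · rw [Set.indicator_of_notMem (by exact h)]
    push Not at h
    rw [min_eq_right, add_zero]
    rw [← sq_abs]
    exact pow_le_one₀ (abs_nonneg x) h.le

/-- weak convergence, as `λ → 0`, of the marginals of the interpolating
family to the Gaussian law with mean `μ` and variance `σ²` (Lemma `X0`). -/
theorem interpolating_family_converges_weakly_to_gaussian
    (μ c : ℝ) (hc : 0 ≤ c) (K : MeasureTheory.Measure ℝ)
    (hK0 : K {0} = 0)
    (hKmin : ∫⁻ x : ℝ, ENNReal.ofReal (min 1 (x ^ 2)) ∂K ≠ ⊤)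
    (R : ℝ) (hR : R ≠ 0) (a b : ℝ)
    (h0 : (0 : ℝ) ∈ Set.Ioo a b) (h2 : (2 : ℝ) ∈ Set.Ioo a b)
    (h2R : 2 * R ∈ Set.Ioo a b)
    (hK5 : ∫⁻ x in {x : ℝ | 1 ≤ |x|}, ENNReal.ofReal (|x| ^ 5) ∂K ≠ ⊤)
    (hKexp : ∀ s ∈ Set.Ioo a b,
      ∫⁻ x in {x : ℝ | 1 ≤ |x|}, ENNReal.ofReal (Real.exp (s * x)) ∂K ≠ ⊤)
    (σ2 : ℝ) (hσ2 : σ2 = c + ∫ x : ℝ, x ^ 2 ∂K) (hσ2pos : 0 < σ2)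
    (ν : ℝ → ProbabilityMeasure ℝ)
    (hν : ∀ lam ∈ Set.Ioc (0 : ℝ) 1, ∀ u : ℝ,
      ∫ x : ℝ, Complex.exp ((u : ℂ) * (x : ℂ) * Complex.I) ∂(ν lam : Measure ℝ) =
        Complex.exp (kappa μ c K lam ((u : ℂ) * Complex.I))) :
    Filter.Tendsto ν (𝓝[Set.Ioc (0 : ℝ) 1] 0)
      (𝓝 (⟨gaussianReal μ (Real.toNNReal σ2), inferInstance⟩ : ProbabilityMeasure ℝ)) := by
  have hx2 := aux_int_s10 K hKmin hK5
  have hkap : ∀ u : ℝ, Tendsto (fun l => kappa μ c K l ((u : ℂ) * I)) (𝓝[Set.Ioc (0 : ℝ) 1] 0)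
      (𝓝 (u * μ * I - σ2 * u ^ 2 / 2)) := by
    intro u
    have hD : Tendsto (fun l : ℝ => ∫ x : ℝ, ((l : ℂ) ^ 2)⁻¹ *
        (Complex.exp (l * ((u : ℂ) * I * x)) - 1 - l * ((u : ℂ) * I * x)) ∂K)
        (𝓝[Set.Ioc (0 : ℝ) 1] 0) (𝓝 (∫ x : ℝ, ((u : ℂ) * I * x) ^ 2 / 2 ∂K)) := by
      refine tendsto_integral_filter_of_dominated_convergence (fun x => 3 * u ^ 2 * x ^ 2)
        (Eventually.of_forall fun l => by fun_prop) ?_ (hx2.const_mul _)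
        (Eventually.of_forall fun x => aux_lim _)
      filter_upwards [self_mem_nhdsWithin] with l hl
      refine Eventually.of_forall fun x => ?_
      have hlp : 0 < l := hl.1
      have hb := aux_bound (l * u * x)
      have e : (l : ℂ) * ((u : ℂ) * I * x) = ((l * u * x : ℝ) : ℂ) * I := by push_cast; ring
      rw [e, norm_mul, norm_inv, norm_pow, Complex.norm_real, Real.norm_eq_abs, abs_of_pos hlp]
      calc _ ≤ (l ^ 2)⁻¹ * (3 * (l * u * x) ^ 2) := by gcongr
        _ = _ := by field_simp
    have hval : ∫ x : ℝ, ((u : ℂ) * I * x) ^ 2 / 2 ∂K = -(u : ℂ) ^ 2 / 2 * ((∫ x : ℝ, x ^ 2 ∂K : ℝ) : ℂ) := by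
      rw [← integral_complex_ofReal, ← integral_const_mul]
      congr 1 with x
      push_cast
      rw [mul_pow, mul_pow, I_sq]
      ring
    rw [hval] at hD
    have hD2 := hD.const_add ((μ : ℂ) * (u * I) + (c : ℂ) / 2 * (u * I) ^ 2)
    have e : (μ : ℂ) * (u * I) + (c : ℂ) / 2 * (u * I) ^ 2 +
        -(u : ℂ) ^ 2 / 2 * ((∫ x : ℝ, x ^ 2 ∂K : ℝ) : ℂ) = u * μ * I - σ2 * u ^ 2 / 2 := by
      rw [hσ2, mul_pow, I_sq]
      push_cast
      ring
    rw [e] at hD2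
    refine hD2.congr' ?_
    filter_upwards [self_mem_nhdsWithin] with l hl
    have hl0 : l ≠ 0 := hl.1.ne'
    rw [kappa, if_neg hl0, integral_const_mul]
    simp only [mul_assoc]
  refine tendsto_of_seq_tendsto fun s hs => ?_
  refine ProbabilityMeasure.tendsto_of_tendsto_charFun fun t => ?_
  have hlim := ((Complex.continuous_exp.tendsto _).comp (hkap t)).comp hs
  have hg : charFun (gaussianReal μ (Real.toNNReal σ2)) t
      = Complex.exp (t * μ * I - σ2 * t ^ 2 / 2) := by
    rw [charFun_gaussianReal, Real.coe_toNNReal _ hσ2pos.le]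
  change Tendsto _ _ (𝓝 (charFun (gaussianReal μ (Real.toNNReal σ2)) t))
  rw [hg]
  refine hlim.congr' ?_
  filter_upwards [hs.eventually self_mem_nhdsWithin] with n hn
  rw [charFun_apply_real, Function.comp_apply, Function.comp_apply, ← hν _ hn t]
  rfl
end
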